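/- arXiv:2510.22393 — 4 statements merged into one kernel-verified Lean document; each statement's English description precedes it below -/
import Mathlib

section
/- Let A be an m×n real matrix of rank r_A and let 1 ≤ p < r_A. Let r ≥ p be an integer with r < min(m,n) such that σ_p/2 ≤ σ_p − σ_{r+1}, and set x̄ := max_{1≤i,j≤r} |u_iᵀ E v_j|. Assume that 0 < 4‖E‖ ≤ δ_p := σ_p − σ_{p+1} ≤ σ_p/4. Then max{ ‖Π̃_p^{left} − Π_p^{left}‖, ‖Π̃_p^{right} − Π_p^{right}‖ } ≤ 24√2 ( (‖E‖/σ_p)·log(6σ₁/δ_p) + r²x̄/δ_p ). -/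
open Matrix

/-- The spectral norm (ℓ²→ℓ² operator norm) of a matrix. -/
noncomputable def specNorm {𝕜 : Type*} [RCLike 𝕜] {m n : ℕ}
    (M : Matrix (Fin m) (Fin n) 𝕜) : ℝ :=
  ‖LinearMap.toContinuousLinearMap (Matrix.toEuclideanLin M)‖

/-!
The singular subspaces are compared through a Sylvester-type inequality. Let `P`, `Q` be the
projections onto corresponding left and right singular subspaces of `A`, and `P'`, `Q'` those onto
the leading singular subspaces of `B = A + E`. Since `P A = P A Q`, the identity
`P B Q' = (P A) Q Q' + P E Q'` and a lower bound `t` for `B` on the range of `Q'` give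
`t ‖P P'‖ ≤ ‖P A‖ ‖Q Q'‖ + ‖P E Q'‖`. Together with the same inequality for the adjoints, this
bounds `‖P P'‖` and `‖Q Q'‖` by `max (‖P E Q'‖, ‖P' E Q‖) / (t - ‖P A‖)` as soon as `‖P A‖ < t`;
Weyl's inequality allows `t = σ_p - ‖E‖`.

The estimate is used at two scales. On the singular subspaces of index `> r`, where `A` has norm at
most `σ_p / 2`, the gap is at least `σ_p / 4`, and the contribution is of order `‖E‖ / σ_p`. On
those of index in `(p, r]` the gap is only of order `δ_p`, but there `E` enters through its `r × r`
block, of norm at most `r² x̄`, up to an error controlled by the first estimate. Finally, two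
subspaces of equal dimension satisfy `‖P' - P‖ ≤ ‖(1 - P) P'‖`.
-/

section EqualDimension

open Submodule

variable {𝕜 E : Type*} [RCLike 𝕜] [NormedAddCommGroup E] [InnerProductSpace 𝕜 E]
  {K L : Submodule 𝕜 E}

theorem norm_starProjection_orthogonal_le_iff (K : Submodule 𝕜 E) [K.HasOrthogonalProjection]
    {s : ℝ} (hs : 0 ≤ s) (x : E) :
    ‖Kᗮ.starProjection x‖ ≤ s * ‖x‖ ↔ (1 - s ^ 2) * ‖x‖ ^ 2 ≤ ‖K.starProjection x‖ ^ 2 := by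
  have pythagoras := K.norm_sq_eq_add_norm_sq_starProjection x
  rw [← sq_le_sq₀ (norm_nonneg _) (by positivity), mul_pow]
  constructor <;> intro h <;> linarith

theorem exists_mem_starProjection_eq [FiniteDimensional 𝕜 K] [FiniteDimensional 𝕜 L]
    (hdim : Module.finrank 𝕜 K = Module.finrank 𝕜 L)
    (hL : ∀ y ∈ L, K.starProjection y = 0 → y = 0) {x : E} (hx : x ∈ K) :
    ∃ y ∈ L, K.starProjection y = x := by
  let f : L →ₗ[𝕜] K := K.orthogonalProjectionOnto.toLinearMap ∘ₗ L.subtype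
  have f_injective : Function.Injective f := by
    refine LinearMap.ker_eq_bot.mp (LinearMap.ker_eq_bot'.mpr fun y hy ↦ ?_)
    exact Subtype.ext (hL y y.2 congr(($hy : E)))
  obtain ⟨y, hy⟩ :=
    (LinearMap.injective_iff_surjective_of_finrank_eq_finrank hdim.symm).mp f_injective ⟨x, hx⟩
  exact ⟨y, y.2, congr(($hy : E))⟩

theorem norm_starProjection_orthogonal_le_of_finrank_eq
    [FiniteDimensional 𝕜 K] [FiniteDimensional 𝕜 L]
    (hdim : Module.finrank 𝕜 K = Module.finrank 𝕜 L) {s : ℝ} (hs : 0 ≤ s)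
    (hL : ∀ y ∈ L, ‖Kᗮ.starProjection y‖ ≤ s * ‖y‖) {x : E} (hx : x ∈ K) :
    ‖Lᗮ.starProjection x‖ ≤ s * ‖x‖ := by
  rcases le_or_gt 1 s with hs1 | hs1
  · calc ‖Lᗮ.starProjection x‖ ≤ ‖x‖ := Lᗮ.norm_starProjection_apply_le x
      _ ≤ s * ‖x‖ := le_mul_of_one_le_left (norm_nonneg x) hs1
  have hs2 : 0 < 1 - s ^ 2 := by nlinarith
  rw [norm_starProjection_orthogonal_le_iff L hs]
  replace hL : ∀ y ∈ L, (1 - s ^ 2) * ‖y‖ ^ 2 ≤ ‖K.starProjection y‖ ^ 2 :=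
    fun y hy ↦ (norm_starProjection_orthogonal_le_iff K hs y).mp (hL y hy)
  obtain ⟨y, hy, rfl⟩ : ∃ y ∈ L, K.starProjection y = x := by
    refine exists_mem_starProjection_eq hdim (fun y hy hKy ↦ ?_) hx
    have := hL y hy
    rw [hKy, norm_zero] at this
    exact norm_eq_zero.mp (pow_eq_zero_iff two_ne_zero |>.mp (by nlinarith [sq_nonneg ‖y‖]))
  set x := K.starProjection y
  have norm_sq_le : ‖x‖ ^ 2 ≤ ‖L.starProjection x‖ * ‖y‖ := calc
    ‖x‖ ^ 2 = RCLike.re (inner 𝕜 (L.starProjection x) y) := by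
      rw [inner_starProjection_left_eq_right, starProjection_eq_self_iff.mpr hy,
        re_inner_starProjection_eq_normSq]
      rfl
    _ ≤ ‖L.starProjection x‖ * ‖y‖ := re_inner_le_norm _ _
  rcases eq_or_ne x 0 with hx0 | hx0
  · simp [hx0]
  refine le_of_mul_le_mul_left ?_ (by positivity : 0 < ‖x‖ ^ 2)
  calc ‖x‖ ^ 2 * ((1 - s ^ 2) * ‖x‖ ^ 2)
      = (1 - s ^ 2) * (‖x‖ ^ 2) ^ 2 := by ring
    _ ≤ (1 - s ^ 2) * (‖L.starProjection x‖ * ‖y‖) ^ 2 := by gcongr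
    _ = ‖L.starProjection x‖ ^ 2 * ((1 - s ^ 2) * ‖y‖ ^ 2) := by ring
    _ ≤ ‖L.starProjection x‖ ^ 2 * ‖x‖ ^ 2 := by gcongr; exact hL y hy
    _ = ‖x‖ ^ 2 * ‖L.starProjection x‖ ^ 2 := mul_comm _ _

theorem norm_starProjection_le_of_mem_orthogonal [K.HasOrthogonalProjection]
    [L.HasOrthogonalProjection] {s : ℝ} (hs : 0 ≤ s)
    (hK : ∀ x ∈ K, ‖Lᗮ.starProjection x‖ ≤ s * ‖x‖) {y : E} (hy : y ∈ Lᗮ) :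
    ‖K.starProjection y‖ ≤ s * ‖y‖ := by
  set x := K.starProjection y
  have hx : x ∈ K := K.starProjection_apply_mem y
  have norm_sq_le : ‖x‖ ^ 2 ≤ s * ‖x‖ * ‖y‖ := calc
    ‖x‖ ^ 2 = RCLike.re (inner 𝕜 (Lᗮ.starProjection x) y) := by
      rw [inner_starProjection_left_eq_right, starProjection_eq_self_iff.mpr hy,
        re_inner_starProjection_eq_normSq]
      rfl
    _ ≤ ‖Lᗮ.starProjection x‖ * ‖y‖ := re_inner_le_norm _ _
    _ ≤ s * ‖x‖ * ‖y‖ := by gcongr; exact hK x hx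
  rcases eq_or_ne x 0 with hx0 | hx0
  · rw [hx0, norm_zero]
    positivity
  · exact le_of_mul_le_mul_left (by linarith) (norm_pos_iff.mpr hx0)

theorem norm_starProjection_sub_starProjection_le
    [FiniteDimensional 𝕜 K] [FiniteDimensional 𝕜 L]
    (hdim : Module.finrank 𝕜 K = Module.finrank 𝕜 L) :
    ‖L.starProjection - K.starProjection‖ ≤ ‖Kᗮ.starProjection ∘L L.starProjection‖ := by
  set s := ‖Kᗮ.starProjection ∘L L.starProjection‖
  have hs : 0 ≤ s := norm_nonneg _
  have hL (y : E) (hy : y ∈ L) : ‖Kᗮ.starProjection y‖ ≤ s * ‖y‖ := by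
    simpa only [ContinuousLinearMap.comp_apply, starProjection_eq_self_iff.mpr hy] using
      (Kᗮ.starProjection ∘L L.starProjection).le_opNorm y
  have hK (y : E) (hy : y ∈ Lᗮ) : ‖K.starProjection y‖ ≤ s * ‖y‖ :=
    norm_starProjection_le_of_mem_orthogonal hs
      (fun _ ↦ norm_starProjection_orthogonal_le_of_finrank_eq hdim hs hL) hy
  refine ContinuousLinearMap.opNorm_le_bound _ hs fun z ↦ ?_
  set w := (L.starProjection - K.starProjection) z with hw
  have orthogonal_part : Kᗮ.starProjection w = Kᗮ.starProjection (L.starProjection z) := by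
    rw [hw, _root_.sub_apply, map_sub, starProjection_orthogonal_apply_eq_zero
      (K.starProjection_apply_mem z), sub_zero]
  have parallel_part : K.starProjection w = -K.starProjection (Lᗮ.starProjection z) := by
    rw [hw, starProjection_orthogonal_val, _root_.sub_apply, map_sub, map_sub, neg_sub,
      starProjection_eq_self_iff.mpr (K.starProjection_apply_mem z)]
  rw [← sq_le_sq₀ (norm_nonneg _) (by positivity)]
  calc ‖w‖ ^ 2
      = ‖K.starProjection (Lᗮ.starProjection z)‖ ^ 2
          + ‖Kᗮ.starProjection (L.starProjection z)‖ ^ 2 := by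
        rw [K.norm_sq_eq_add_norm_sq_starProjection w, orthogonal_part, parallel_part, norm_neg]
    _ ≤ (s * ‖Lᗮ.starProjection z‖) ^ 2 + (s * ‖L.starProjection z‖) ^ 2 := by
        gcongr
        exacts [hK _ (Lᗮ.starProjection_apply_mem z), hL _ (L.starProjection_apply_mem z)]
    _ = (s * ‖z‖) ^ 2 := by
        rw [mul_pow _ ‖z‖, L.norm_sq_eq_add_norm_sq_starProjection z]
        ring

end EqualDimension

section ModeSpan

open Submodule InnerProductSpace

variable {𝕜 ι E F : Type*} [RCLike 𝕜] [NormedAddCommGroup E] [InnerProductSpace 𝕜 E]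
  [NormedAddCommGroup F] [InnerProductSpace 𝕜 F] {u : ι → E} {v : ι → F}

variable (𝕜) in
/-- The singular subspace spanned by the vectors of a family `u` with index in `S`; its orthogonal
projection is `Π_S = ∑ i ∈ S, u_i u_i*`. -/
def modeSpan (u : ι → E) (S : Finset ι) : Submodule 𝕜 E :=
  span 𝕜 (u '' S)

instance (u : ι → E) (S : Finset ι) : FiniteDimensional 𝕜 (modeSpan 𝕜 u S) :=
  FiniteDimensional.span_of_finite 𝕜 (S.finite_toSet.image u)

theorem mem_modeSpan {S : Finset ι} {i : ι} (hi : i ∈ S) : u i ∈ modeSpan 𝕜 u S :=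
  subset_span ⟨i, hi, rfl⟩

theorem modeSpan_mono {S R : Finset ι} (hSR : S ⊆ R) : modeSpan 𝕜 u S ≤ modeSpan 𝕜 u R :=
  span_mono (Set.image_mono (Finset.coe_subset.mpr hSR))

theorem mem_modeSpan_orthogonal_iff {S : Finset ι} {x : E} :
    x ∈ (modeSpan 𝕜 u S)ᗮ ↔ ∀ i ∈ S, inner 𝕜 (u i) x = 0 := by
  refine ⟨fun hx i hi ↦ hx _ (mem_modeSpan hi), fun hx y hy ↦ ?_⟩
  induction hy using span_induction with
  | mem y hy => obtain ⟨i, hi, rfl⟩ := hy; exact hx i hi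
  | zero => exact inner_zero_left x
  | add y z _ _ hy hz => rw [inner_add_left, hy, hz, add_zero]
  | smul c y _ hy => rw [inner_smul_left, hy, mul_zero]

theorem inner_eq_zero_of_mem_modeSpan (hu : Orthonormal 𝕜 u) {S : Finset ι} {i : ι} (hi : i ∉ S)
    {x : E} (hx : x ∈ modeSpan 𝕜 u S) : inner 𝕜 (u i) x = 0 := by
  refine inner_left_of_mem_orthogonal hx (mem_modeSpan_orthogonal_iff.mpr fun j hj ↦ ?_)
  exact hu.inner_eq_zero (ne_of_mem_of_not_mem hj hi)

theorem finrank_modeSpan (hu : Orthonormal 𝕜 u) (S : Finset ι) :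
    Module.finrank 𝕜 (modeSpan 𝕜 u S) = S.card := by
  have range_restrict : Set.range (u ∘ ((↑) : S → ι)) = u '' S := by
    rw [Set.range_comp, Subtype.range_coe_subtype, Finset.setOfPred_mem]
  rw [modeSpan, ← range_restrict, finrank_span_eq_card
    (hu.linearIndependent.comp ((↑) : S → ι) Subtype.val_injective), Fintype.card_coe]

theorem starProjection_modeSpan (hu : Orthonormal 𝕜 u) (S : Finset ι) :
    (modeSpan 𝕜 u S).starProjection = ∑ i ∈ S, rankOne 𝕜 (u i) (u i) := by
  ext x
  simp only [_root_.sum_apply, rankOne_apply]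
  refine eq_starProjection_of_mem_orthogonal
    (sum_mem fun i hi ↦ smul_mem _ _ (mem_modeSpan hi))
    (mem_modeSpan_orthogonal_iff.mpr fun i hi ↦ ?_)
  rw [inner_sub_right, hu.inner_right_sum _ hi, sub_self]

end ModeSpan

section SingularValueDecomposition

open Submodule InnerProductSpace

variable {𝕜 ι E F : Type*} [RCLike 𝕜] [Fintype ι]
  [NormedAddCommGroup E] [InnerProductSpace 𝕜 E] [NormedAddCommGroup F] [InnerProductSpace 𝕜 F]
  {A B : E →L[𝕜] F} {σ σ' : ι → ℝ} {u u' : ι → F} {v v' : ι → E} {S R T : Finset ι}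

/-- A finite singular value decomposition `A = ∑ i, σ_i u_i v_i*`. The singular values are not
required to be ordered, and may vanish. -/
structure IsSVD (A : E →L[𝕜] F) (σ : ι → ℝ) (u : ι → F) (v : ι → E) : Prop where
  left_orthonormal : Orthonormal 𝕜 u
  right_orthonormal : Orthonormal 𝕜 v
  nonneg : ∀ i, 0 ≤ σ i
  eq_sum : A = ∑ i, (σ i : 𝕜) • rankOne 𝕜 (u i) (v i)

namespace IsSVD

theorem apply_eq_sum (h : IsSVD A σ u v) (x : E) :
    A x = ∑ i, ((σ i : 𝕜) * inner 𝕜 (v i) x) • u i := by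
  simp only [h.eq_sum, _root_.sum_apply, _root_.smul_apply, rankOne_apply, smul_smul]

theorem apply_right (h : IsSVD A σ u v) (i : ι) : A (v i) = (σ i : 𝕜) • u i := by
  classical
  simp [h.apply_eq_sum, orthonormal_iff_ite.mp h.right_orthonormal]

theorem norm_apply_le (h : IsSVD A σ u v) {c : ℝ} (hc : 0 ≤ c) {x : E}
    (hx : ∀ i, σ i ≤ c ∨ inner 𝕜 (v i) x = 0) : ‖A x‖ ≤ c * ‖x‖ := by
  rw [← sq_le_sq₀ (norm_nonneg _) (by positivity), mul_pow]
  calc ‖A x‖ ^ 2 = ∑ i, ‖(σ i : 𝕜) * inner 𝕜 (v i) x‖ ^ 2 := by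
        rw [norm_sq_eq_re_inner (𝕜 := 𝕜), h.apply_eq_sum, h.left_orthonormal.inner_sum, map_sum]
        refine Finset.sum_congr rfl fun i _ ↦ ?_
        rw [RCLike.conj_mul]
        norm_cast
    _ ≤ ∑ i, c ^ 2 * ‖inner 𝕜 (v i) x‖ ^ 2 := by
        refine Finset.sum_le_sum fun i _ ↦ ?_
        rw [norm_mul, mul_pow, RCLike.norm_ofReal, sq_abs]
        rcases hx i with hi | hi
        · gcongr
          exact h.nonneg i
        · simp [hi]
    _ ≤ c ^ 2 * ‖x‖ ^ 2 := by
        rw [← Finset.mul_sum]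
        gcongr
        exact h.right_orthonormal.sum_inner_products_le x

theorem apply_mem (h : IsSVD A σ u v) {x : E} (hx : x ∈ modeSpan 𝕜 v S) :
    A x ∈ modeSpan 𝕜 u S := by
  have : modeSpan 𝕜 v S ≤ (modeSpan 𝕜 u S).comap A.toLinearMap := by
    rw [modeSpan, span_le]
    rintro _ ⟨i, hi, rfl⟩
    simpa [h.apply_right] using smul_mem _ _ (mem_modeSpan hi)
  exact this hx

theorem exists_pseudoinverse (h : IsSVD A σ u v) :
    ∃ A' : F →L[𝕜] E, IsSVD A' (fun i ↦ (σ i)⁻¹) v u :=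
  ⟨_, h.right_orthonormal, h.left_orthonormal, fun i ↦ inv_nonneg.mpr (h.nonneg i), rfl⟩

theorem pseudoinverse_apply {A' : F →L[𝕜] E} (h : IsSVD A σ u v)
    (h' : IsSVD A' (fun i ↦ (σ i)⁻¹) v u) (hS : ∀ i ∈ S, σ i ≠ 0) {x : E}
    (hx : x ∈ modeSpan 𝕜 v S) : A' (A x) = x := by
  have : Set.EqOn (A' ∘L A).toLinearMap (LinearMap.id (R := 𝕜)) (modeSpan 𝕜 v S) := by
    refine LinearMap.eqOn_span' ?_
    rintro _ ⟨i, hi, rfl⟩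
    have : (σ i : 𝕜) ≠ 0 := by exact_mod_cast hS i hi
    simp [h.apply_right, h'.apply_right, smul_smul, this]
  exact this hx

theorem le_norm_apply (h : IsSVD A σ u v) {t : ℝ} (ht : 0 < t) (hS : ∀ i ∈ S, t ≤ σ i) {x : E}
    (hx : x ∈ modeSpan 𝕜 v S) : t * ‖x‖ ≤ ‖A x‖ := by
  obtain ⟨A', h'⟩ := h.exists_pseudoinverse
  have := h'.norm_apply_le (x := A x) (inv_nonneg.mpr ht.le) fun i ↦ ?_
  · rwa [h.pseudoinverse_apply h' (fun i hi ↦ (ht.trans_le (hS i hi)).ne') hx,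
      le_inv_mul_iff₀ ht] at this
  by_cases hi : i ∈ S
  · exact .inl (inv_anti₀ ht (hS i hi))
  · exact .inr (inner_eq_zero_of_mem_modeSpan h.left_orthonormal hi (h.apply_mem hx))

theorem exists_mem_apply_eq (h : IsSVD A σ u v) (hS : ∀ i ∈ S, σ i ≠ 0) {z : F}
    (hz : z ∈ modeSpan 𝕜 u S) : ∃ x ∈ modeSpan 𝕜 v S, A x = z := by
  obtain ⟨A', h'⟩ := h.exists_pseudoinverse
  refine ⟨A' z, h'.apply_mem hz, ?_⟩
  have h'' : IsSVD A (fun i ↦ (σ i)⁻¹⁻¹) u v := by simpa only [inv_inv] using h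
  exact h'.pseudoinverse_apply h'' (fun i hi ↦ inv_ne_zero (hS i hi)) hz

theorem inner_left_apply (h : IsSVD A σ u v) (i : ι) (x : E) :
    inner 𝕜 (u i) (A x) = σ i * inner 𝕜 (v i) x := by
  rw [h.apply_eq_sum, h.left_orthonormal.inner_right_fintype]

theorem starProjection_comp (h : IsSVD A σ u v) (S : Finset ι) :
    (modeSpan 𝕜 u S).starProjection ∘L A = A ∘L (modeSpan 𝕜 v S).starProjection := by
  ext x
  refine eq_starProjection_of_mem_orthogonal (h.apply_mem (starProjection_apply_mem _ x))
    (mem_modeSpan_orthogonal_iff.mpr fun i hi ↦ ?_)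
  rw [ContinuousLinearMap.comp_apply, ContinuousLinearMap.coe_coe, ← map_sub, h.inner_left_apply,
    sub_starProjection_mem_orthogonal x _ (mem_modeSpan hi), mul_zero]

theorem starProjection_orthogonal_comp (h : IsSVD A σ u v) (S : Finset ι) :
    (modeSpan 𝕜 u S)ᗮ.starProjection ∘L A = A ∘L (modeSpan 𝕜 v S)ᗮ.starProjection := by
  ext x
  have := congr($(h.starProjection_comp S) x)
  simp only [ContinuousLinearMap.comp_apply] at this
  simp only [ContinuousLinearMap.comp_apply, starProjection_orthogonal_val, map_sub, this]

theorem norm_comp_starProjection_le (h : IsSVD A σ u v) (K : Submodule 𝕜 E)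
    [K.HasOrthogonalProjection] {c : ℝ} (hc : 0 ≤ c)
    (hK : ∀ x ∈ K, ∀ i, σ i ≤ c ∨ inner 𝕜 (v i) x = 0) : ‖A ∘L K.starProjection‖ ≤ c := by
  refine ContinuousLinearMap.opNorm_le_bound _ hc fun x ↦ ?_
  exact (h.norm_apply_le hc (hK _ (K.starProjection_apply_mem x))).trans
    (mul_le_mul_of_nonneg_left (K.norm_starProjection_apply_le x) hc)

theorem norm_starProjection_comp_le (h : IsSVD A σ u v) {c : ℝ} (hc : 0 ≤ c)
    (hS : ∀ i ∈ S, σ i ≤ c) : ‖(modeSpan 𝕜 u S).starProjection ∘L A‖ ≤ c := by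
  rw [h.starProjection_comp]
  exact h.norm_comp_starProjection_le _ hc fun x hx i ↦ or_iff_not_imp_right.mpr fun hi ↦
    hS i (by_contra fun hiS ↦ hi (inner_eq_zero_of_mem_modeSpan h.right_orthonormal hiS hx))

theorem norm_starProjection_orthogonal_comp_le (h : IsSVD A σ u v) {c : ℝ} (hc : 0 ≤ c)
    (hS : ∀ i ∉ S, σ i ≤ c) : ‖(modeSpan 𝕜 u S)ᗮ.starProjection ∘L A‖ ≤ c := by
  rw [h.starProjection_orthogonal_comp]
  exact h.norm_comp_starProjection_le _ hc fun x hx i ↦ or_iff_not_imp_right.mpr fun hi ↦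
    hS i fun hiS ↦ hi (mem_modeSpan_orthogonal_iff.mp hx i hiS)

/-- Weyl's inequality, in a form that does not refer to an ordering of the singular values. -/
theorem le_add_norm_sub (h : IsSVD A σ u v) (h' : IsSVD B σ' u' v') (hcard : T.card < S.card)
    {a b : ℝ} (hS : ∀ i ∈ S, a ≤ σ i) (hb : 0 ≤ b) (hT : ∀ i ∉ T, σ' i ≤ b) :
    a ≤ b + ‖B - A‖ := by
  rcases le_or_gt a 0 with ha | ha
  · exact ha.trans (by positivity)
  let f : modeSpan 𝕜 v S →ₗ[𝕜] modeSpan 𝕜 v' T :=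
    (modeSpan 𝕜 v' T).orthogonalProjectionOnto.toLinearMap ∘ₗ (modeSpan 𝕜 v S).subtype
  have hf : f.ker ≠ ⊥ := f.ker_ne_bot_of_finrank_lt
    (by rwa [finrank_modeSpan h'.right_orthonormal, finrank_modeSpan h.right_orthonormal])
  obtain ⟨⟨x, hx⟩, hfx, hx0⟩ := (Submodule.ne_bot_iff _).mp hf
  have hx0 : x ≠ 0 := fun h0 ↦ hx0 (Subtype.ext h0)
  have hx' : x ∈ (modeSpan 𝕜 v' T)ᗮ := orthogonalProjectionOnto_eq_zero_iff.mp hfx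
  refine le_of_mul_le_mul_right ?_ (norm_pos_iff.mpr hx0)
  calc a * ‖x‖ ≤ ‖A x‖ := h.le_norm_apply ha hS hx
    _ = ‖B x - (B - A) x‖ := by simp
    _ ≤ ‖B x‖ + ‖(B - A) x‖ := norm_sub_le _ _
    _ ≤ b * ‖x‖ + ‖B - A‖ * ‖x‖ := by
      gcongr
      · refine h'.norm_apply_le hb fun i ↦ ?_
        by_cases hi : i ∈ T
        · exact .inr (hx' _ (mem_modeSpan hi))
        · exact .inl (hT i hi)
      · exact (B - A).le_opNorm x
    _ = (b + ‖B - A‖) * ‖x‖ := by ring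

theorem mul_norm_comp_starProjection_le {G : Type*} [NormedAddCommGroup G] [NormedSpace 𝕜 G]
    (h : IsSVD A σ u v) {t : ℝ} (ht : 0 < t) (hS : ∀ i ∈ S, t ≤ σ i) (M : F →L[𝕜] G) :
    t * ‖M ∘L (modeSpan 𝕜 u S).starProjection‖ ≤ ‖M ∘L A ∘L (modeSpan 𝕜 v S).starProjection‖ := by
  rw [← le_inv_mul_iff₀ ht]
  refine ContinuousLinearMap.opNorm_le_bound _ (by positivity) fun z ↦ ?_
  set N := M ∘L A ∘L (modeSpan 𝕜 v S).starProjection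
  obtain ⟨x, hx, hxz⟩ := h.exists_mem_apply_eq (fun i hi ↦ (ht.trans_le (hS i hi)).ne')
    (starProjection_apply_mem (modeSpan 𝕜 u S) z)
  have norm_x_le : ‖x‖ ≤ t⁻¹ * ‖z‖ := by
    rw [le_inv_mul_iff₀ ht]
    calc t * ‖x‖ ≤ ‖A x‖ := h.le_norm_apply ht hS hx
      _ ≤ ‖z‖ := hxz ▸ norm_starProjection_apply_le _ z
  calc ‖(M ∘L (modeSpan 𝕜 u S).starProjection) z‖ = ‖N x‖ := by
        simp [N, starProjection_eq_self_iff.mpr hx, hxz]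
    _ ≤ ‖N‖ * ‖x‖ := N.le_opNorm x
    _ ≤ ‖N‖ * (t⁻¹ * ‖z‖) := by gcongr
    _ = t⁻¹ * ‖N‖ * ‖z‖ := by ring

/-- From the Sylvester identity `P B Q' = (P A) Q Q' + P (B - A) Q'`. -/
theorem mul_norm_comp_starProjection_le_add (h' : IsSVD B σ' u' v') {t c : ℝ} (ht : 0 < t)
    (hS : ∀ i ∈ S, t ≤ σ' i) {P : F →L[𝕜] F} {Q : E →L[𝕜] E} (hPQ : P ∘L A = P ∘L A ∘L Q)
    (hc : ‖P ∘L A‖ ≤ c) :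
    t * ‖P ∘L (modeSpan 𝕜 u' S).starProjection‖
      ≤ c * ‖Q ∘L (modeSpan 𝕜 v' S).starProjection‖
        + ‖P ∘L (B - A) ∘L (modeSpan 𝕜 v' S).starProjection‖ := by
  set Q' := (modeSpan 𝕜 v' S).starProjection
  calc t * ‖P ∘L (modeSpan 𝕜 u' S).starProjection‖
      ≤ ‖P ∘L B ∘L Q'‖ := h'.mul_norm_comp_starProjection_le ht hS P
    _ = ‖(P ∘L A) ∘L (Q ∘L Q') + P ∘L (B - A) ∘L Q'‖ := by
      congr 1
      ext x
      have := congr($hPQ (Q' x))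
      simp only [ContinuousLinearMap.comp_apply] at this
      simp [← this]
    _ ≤ ‖P ∘L A‖ * ‖Q ∘L Q'‖ + ‖P ∘L (B - A) ∘L Q'‖ :=
      (norm_add_le _ _).trans (by gcongr; exact ContinuousLinearMap.opNorm_comp_le _ _)
    _ ≤ c * ‖Q ∘L Q'‖ + ‖P ∘L (B - A) ∘L Q'‖ := by gcongr

variable [CompleteSpace E] [CompleteSpace F]

protected theorem adjoint (h : IsSVD A σ u v) : IsSVD A.adjoint σ v u where
  left_orthonormal := h.right_orthonormal
  right_orthonormal := h.left_orthonormal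
  nonneg := h.nonneg
  eq_sum := by simp [h.eq_sum, map_sum, map_smulₛₗ]

end IsSVD

end SingularValueDecomposition

section Perturbation

open Submodule InnerProductSpace ContinuousLinearMap

theorem max_le_div_of_coupled {a b s t f : ℝ} (hs : 0 ≤ s) (hst : s < t)
    (ha : t * a ≤ s * b + f) (hb : t * b ≤ s * a + f) : max a b ≤ f / (t - s) := by
  rw [le_div_iff₀ (sub_pos.mpr hst)]
  rcases max_cases a b with ⟨hmax, hab⟩ | ⟨hmax, hab⟩ <;> rw [hmax] <;> nlinarith

variable {𝕜 ι E F : Type*} [RCLike 𝕜] [NormedAddCommGroup E] [InnerProductSpace 𝕜 E]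
  [NormedAddCommGroup F] [InnerProductSpace 𝕜 F]

theorem norm_starProjection_comp_le_of_le {K L : Submodule 𝕜 F} [K.HasOrthogonalProjection]
    [L.HasOrthogonalProjection] (hKL : K ≤ L) (M : E →L[𝕜] F) :
    ‖K.starProjection ∘L M‖ ≤ ‖L.starProjection ∘L M‖ := calc
  ‖K.starProjection ∘L M‖ = ‖K.starProjection ∘L (L.starProjection ∘L M)‖ := by
    rw [← comp_assoc, starProjection_comp_starProjection_of_le hKL]
  _ ≤ ‖K.starProjection‖ * ‖L.starProjection ∘L M‖ := opNorm_comp_le _ _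
  _ ≤ ‖L.starProjection ∘L M‖ :=
    mul_le_of_le_one_left (norm_nonneg _) K.starProjection_norm_le

theorem norm_comp_starProjection_le_norm (K : Submodule 𝕜 E) [K.HasOrthogonalProjection]
    (M : E →L[𝕜] F) : ‖M ∘L K.starProjection‖ ≤ ‖M‖ :=
  (opNorm_comp_le _ _).trans (mul_le_of_le_one_right (norm_nonneg _) K.starProjection_norm_le)

theorem norm_starProjection_comp_le_norm (K : Submodule 𝕜 F) [K.HasOrthogonalProjection]
    (M : E →L[𝕜] F) : ‖K.starProjection ∘L M‖ ≤ ‖M‖ :=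
  (opNorm_comp_le _ _).trans (mul_le_of_le_one_left (norm_nonneg _) K.starProjection_norm_le)

theorem norm_starProjection_comp_comp_starProjection_le (K : Submodule 𝕜 F)
    [K.HasOrthogonalProjection] (L L' : Submodule 𝕜 E) [L.HasOrthogonalProjection]
    [L'.HasOrthogonalProjection] (M : E →L[𝕜] F) :
    ‖K.starProjection ∘L M ∘L L'.starProjection‖
      ≤ ‖K.starProjection ∘L M ∘L L.starProjection‖
        + ‖M‖ * ‖Lᗮ.starProjection ∘L L'.starProjection‖ := by
  have split : K.starProjection ∘L M ∘L L'.starProjection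
      = (K.starProjection ∘L M ∘L L.starProjection) ∘L L'.starProjection
        + (K.starProjection ∘L M) ∘L (Lᗮ.starProjection ∘L L'.starProjection) := by
    ext x
    simp [starProjection_orthogonal_val]
  rw [split]
  refine (norm_add_le _ _).trans (add_le_add (norm_comp_starProjection_le_norm _ _) ?_)
  exact (opNorm_comp_le _ _).trans (by gcongr; exact norm_starProjection_comp_le_norm K M)

theorem norm_starProjection_adjoint_comp [CompleteSpace E] [CompleteSpace F] (K : Submodule 𝕜 F)
    [K.HasOrthogonalProjection] (L : Submodule 𝕜 E) [L.HasOrthogonalProjection]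
    (M : E →L[𝕜] F) :
    ‖L.starProjection ∘L M.adjoint ∘L K.starProjection‖
      = ‖K.starProjection ∘L M ∘L L.starProjection‖ := by
  rw [← LinearIsometryEquiv.norm_map adjoint (K.starProjection ∘L M ∘L L.starProjection)]
  simp only [adjoint_comp, comp_assoc, (isSelfAdjoint_starProjection _).adjoint_eq]

theorem norm_starProjection_modeSpan_comp_le {u : ι → F} {v : ι → E} (hu : Orthonormal 𝕜 u)
    (hv : Orthonormal 𝕜 v) {R : Finset ι} {M : E →L[𝕜] F} {x : ℝ}
    (hx : ∀ i ∈ R, ∀ j ∈ R, ‖inner 𝕜 (u i) (M (v j))‖ ≤ x) :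
    ‖(modeSpan 𝕜 u R).starProjection ∘L M ∘L (modeSpan 𝕜 v R).starProjection‖
      ≤ (R.card : ℝ) ^ 2 * x := by
  have expand : (modeSpan 𝕜 u R).starProjection ∘L M ∘L (modeSpan 𝕜 v R).starProjection
      = ∑ j ∈ R, ∑ i ∈ R, inner 𝕜 (u i) (M (v j)) • rankOne 𝕜 (u i) (v j) := by
    rw [starProjection_modeSpan hu, starProjection_modeSpan hv]
    ext y
    simp only [ContinuousLinearMap.comp_apply, _root_.sum_apply, _root_.smul_apply, rankOne_apply,
      map_sum, map_smul, Finset.smul_sum, smul_smul, mul_comm]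
  rw [expand]
  calc ‖∑ j ∈ R, ∑ i ∈ R, inner 𝕜 (u i) (M (v j)) • rankOne 𝕜 (u i) (v j)‖
      ≤ ∑ _j ∈ R, ∑ _i ∈ R, x := by
        refine norm_sum_le_of_le _ fun j hj ↦ norm_sum_le_of_le _ fun i hi ↦ ?_
        simpa [norm_smul, hu.norm_eq_one, hv.norm_eq_one] using hx i hi j hj
    _ = (R.card : ℝ) ^ 2 * x := by
        simp only [Finset.sum_const, nsmul_eq_mul]
        ring

namespace IsSVD

variable [Fintype ι] {A B : E →L[𝕜] F} {σ σ' : ι → ℝ}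
  {u u' : ι → F} {v v' : ι → E} {S R T : Finset ι}

theorem mul_norm_orthogonal_comp_le (h : IsSVD A σ u v) (h' : IsSVD B σ' u' v') {t γ : ℝ}
    (ht : 0 < t) (hγ : 0 ≤ γ) (hS : ∀ i ∈ S, t ≤ σ' i) (hR : ∀ i ∉ R, σ i ≤ γ) :
    t * ‖(modeSpan 𝕜 u R)ᗮ.starProjection ∘L (modeSpan 𝕜 u' S).starProjection‖
      ≤ γ * ‖(modeSpan 𝕜 v R)ᗮ.starProjection ∘L (modeSpan 𝕜 v' S).starProjection‖
        + ‖B - A‖ := by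
  have commute : (modeSpan 𝕜 u R)ᗮ.starProjection ∘L A
      = (modeSpan 𝕜 u R)ᗮ.starProjection ∘L A ∘L (modeSpan 𝕜 v R)ᗮ.starProjection := by
    rw [← h.starProjection_orthogonal_comp, ← comp_assoc, starProjection_comp_starProjection_of_le
      le_rfl]
  refine (h'.mul_norm_comp_starProjection_le_add ht hS commute
    (h.norm_starProjection_orthogonal_comp_le hγ hR)).trans ?_
  gcongr
  exact (norm_starProjection_comp_le_norm _ _).trans (norm_comp_starProjection_le_norm _ _)

theorem mul_norm_comp_le (h : IsSVD A σ u v) (h' : IsSVD B σ' u' v') {t β : ℝ} (ht : 0 < t)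
    (hβ : 0 ≤ β) (hS : ∀ i ∈ S, t ≤ σ' i) (hTR : T ⊆ R) (hT : ∀ i ∈ T, σ i ≤ β) :
    t * ‖(modeSpan 𝕜 u T).starProjection ∘L (modeSpan 𝕜 u' S).starProjection‖
      ≤ β * ‖(modeSpan 𝕜 v T).starProjection ∘L (modeSpan 𝕜 v' S).starProjection‖
        + (‖(modeSpan 𝕜 u R).starProjection ∘L (B - A) ∘L (modeSpan 𝕜 v R).starProjection‖
          + ‖B - A‖
            * ‖(modeSpan 𝕜 v R)ᗮ.starProjection ∘L (modeSpan 𝕜 v' S).starProjection‖) := by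
  have commute : (modeSpan 𝕜 u T).starProjection ∘L A
      = (modeSpan 𝕜 u T).starProjection ∘L A ∘L (modeSpan 𝕜 v T).starProjection := by
    rw [← h.starProjection_comp, ← comp_assoc, starProjection_comp_starProjection_of_le le_rfl]
  refine (h'.mul_norm_comp_starProjection_le_add ht hS commute
    (h.norm_starProjection_comp_le hβ hT)).trans ?_
  gcongr
  exact (norm_starProjection_comp_le_of_le (modeSpan_mono hTR) _).trans
    (norm_starProjection_comp_comp_starProjection_le _ _ _ _)

theorem le_add_norm_sub_of_separated (h : IsSVD A σ u v) (h' : IsSVD B σ' u' v') {s : ℝ}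
    (hS : ∀ i ∈ S, s ≤ σ i) (hsep : ∀ i ∈ S, ∀ j ∉ S, σ' j ≤ σ' i) {i : ι} (hi : i ∈ S) :
    s ≤ σ' i + ‖B - A‖ := by
  have hcard : (S.filter (σ' i < σ' ·)).card < S.card :=
    Finset.card_lt_card (Finset.filter_ssubset.mpr ⟨i, hi, lt_irrefl _⟩)
  refine h.le_add_norm_sub h' hcard hS (h'.nonneg i) fun j hj ↦ ?_
  by_cases hjS : j ∈ S
  · exact not_lt.mp fun hlt ↦ hj (Finset.mem_filter.mpr ⟨hjS, hlt⟩)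
  · exact hsep i hi j hjS

theorem norm_modeSpan_sub_le [DecidableEq ι] (h : IsSVD A σ u v) (h' : IsSVD B σ' u' v')
    (hSR : S ⊆ R) :
    ‖(modeSpan 𝕜 u' S).starProjection - (modeSpan 𝕜 u S).starProjection‖
      ≤ ‖(modeSpan 𝕜 u (R \ S)).starProjection ∘L (modeSpan 𝕜 u' S).starProjection‖
        + ‖(modeSpan 𝕜 u R)ᗮ.starProjection ∘L (modeSpan 𝕜 u' S).starProjection‖ := by
  have split : (modeSpan 𝕜 u S)ᗮ.starProjection
      = (modeSpan 𝕜 u (R \ S)).starProjection + (modeSpan 𝕜 u R)ᗮ.starProjection := by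
    simp only [starProjection_orthogonal', starProjection_modeSpan h.left_orthonormal,
      ← Finset.sum_sdiff hSR]
    abel
  refine (norm_starProjection_sub_starProjection_le ?_).trans ?_
  · rw [finrank_modeSpan h.left_orthonormal, finrank_modeSpan h'.left_orthonormal]
  · rw [split, add_comp]
    exact norm_add_le _ _

variable [CompleteSpace E] [CompleteSpace F]

theorem max_norm_orthogonal_comp_le (h : IsSVD A σ u v) (h' : IsSVD B σ' u' v') {t γ : ℝ}
    (hγ : 0 ≤ γ) (hγt : γ < t) (hS : ∀ i ∈ S, t ≤ σ' i) (hR : ∀ i ∉ R, σ i ≤ γ) :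
    max ‖(modeSpan 𝕜 u R)ᗮ.starProjection ∘L (modeSpan 𝕜 u' S).starProjection‖
        ‖(modeSpan 𝕜 v R)ᗮ.starProjection ∘L (modeSpan 𝕜 v' S).starProjection‖
      ≤ ‖B - A‖ / (t - γ) := by
  have ht : 0 < t := hγ.trans_lt hγt
  have hadj := h.adjoint.mul_norm_orthogonal_comp_le h'.adjoint ht hγ hS hR
  rw [← map_sub, LinearIsometryEquiv.norm_map] at hadj
  exact max_le_div_of_coupled hγ hγt (h.mul_norm_orthogonal_comp_le h' ht hγ hS hR) hadj

theorem max_norm_comp_le (h : IsSVD A σ u v) (h' : IsSVD B σ' u' v') {t β a : ℝ} (hβ : 0 ≤ β)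
    (hβt : β < t) (hS : ∀ i ∈ S, t ≤ σ' i) (hTR : T ⊆ R) (hT : ∀ i ∈ T, σ i ≤ β)
    (ha : max ‖(modeSpan 𝕜 u R)ᗮ.starProjection ∘L (modeSpan 𝕜 u' S).starProjection‖
      ‖(modeSpan 𝕜 v R)ᗮ.starProjection ∘L (modeSpan 𝕜 v' S).starProjection‖ ≤ a) :
    max ‖(modeSpan 𝕜 u T).starProjection ∘L (modeSpan 𝕜 u' S).starProjection‖
        ‖(modeSpan 𝕜 v T).starProjection ∘L (modeSpan 𝕜 v' S).starProjection‖
      ≤ (‖(modeSpan 𝕜 u R).starProjection ∘L (B - A) ∘L (modeSpan 𝕜 v R).starProjection‖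
          + ‖B - A‖ * a) / (t - β) := by
  have ht : 0 < t := hβ.trans_lt hβt
  obtain ⟨ha_left, ha_right⟩ := max_le_iff.mp ha
  have hadj := h.adjoint.mul_norm_comp_le h'.adjoint ht hβ hS hTR hT
  rw [← map_sub, LinearIsometryEquiv.norm_map, norm_starProjection_adjoint_comp] at hadj
  refine max_le_div_of_coupled hβ hβt ((h.mul_norm_comp_le h' ht hβ hS hTR hT).trans ?_)
    (hadj.trans ?_) <;> gcongr

theorem max_norm_modeSpan_sub_le (h : IsSVD A σ u v) (h' : IsSVD B σ' u' v') {s δ : ℝ}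
    (hS : ∀ i ∈ S, s ≤ σ i) (hS_compl : ∀ i ∉ S, σ i ≤ s - δ) (hR_compl : ∀ i ∉ R, σ i ≤ s / 2)
    (hSR : S ⊆ R) (hsep : ∀ i ∈ S, ∀ j ∉ S, σ' j ≤ σ' i) (hδ : 0 < δ) (hδs : δ ≤ s)
    (hAB : 4 * ‖B - A‖ ≤ δ) :
    max ‖(modeSpan 𝕜 u' S).starProjection - (modeSpan 𝕜 u S).starProjection‖
        ‖(modeSpan 𝕜 v' S).starProjection - (modeSpan 𝕜 v S).starProjection‖
      ≤ 16 / 3 * (‖B - A‖ / s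
        + ‖(modeSpan 𝕜 u R).starProjection ∘L (B - A) ∘L (modeSpan 𝕜 v R).starProjection‖ / δ) := by
  classical
  have hs : 0 < s := hδ.trans_le hδs
  have hS' : ∀ i ∈ S, s - ‖B - A‖ ≤ σ' i := fun i hi ↦
    sub_le_iff_le_add.mpr (h.le_add_norm_sub_of_separated h' hS hsep hi)
  have hT : ∀ i ∈ R \ S, σ i ≤ s - δ := fun i hi ↦ hS_compl i (Finset.mem_sdiff.mp hi).2
  have he : 0 ≤ ‖B - A‖ := norm_nonneg _
  have left := h.norm_modeSpan_sub_le h' hSR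
  have right := h.adjoint.norm_modeSpan_sub_le h'.adjoint hSR
  have outside := (h.max_norm_orthogonal_comp_le h' (half_pos hs).le (by linarith) hS'
    hR_compl).trans (by gcongr; linarith : _ ≤ ‖B - A‖ / (s / 4))
  have inside := h.max_norm_comp_le h' (by linarith) (by linarith) hS' Finset.sdiff_subset hT
    outside
  set e := ‖B - A‖
  set X := ‖(modeSpan 𝕜 u R).starProjection ∘L (B - A) ∘L (modeSpan 𝕜 v R).starProjection‖
  have : 0 ≤ X := norm_nonneg _
  have total_le : (X + e * (e / (s / 4))) / (s - e - (s - δ)) + e / (s / 4)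
      ≤ 16 / 3 * (e / s + X / δ) := calc
    _ ≤ (X + δ / 4 * (e / (s / 4))) / (3 / 4 * δ) + e / (s / 4) := by gcongr <;> linarith
    _ = 16 / 3 * (e / s) + 4 / 3 * (X / δ) := by field_simp; ring
    _ ≤ 16 / 3 * (e / s) + 16 / 3 * (X / δ) := by gcongr; norm_num
    _ = 16 / 3 * (e / s + X / δ) := (mul_add _ _ _).symm
  refine (max_le (left.trans ?_) (right.trans ?_)).trans total_le
  · exact add_le_add ((le_max_left _ _).trans inside) ((le_max_left _ _).trans outside)
  · exact add_le_add ((le_max_right _ _).trans inside) ((le_max_right _ _).trans outside)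

end IsSVD

end Perturbation

section Completeness

open Module InnerProductSpace

variable {𝕜 ι E F : Type*} [RCLike 𝕜] [Fintype ι]
  [NormedAddCommGroup E] [InnerProductSpace 𝕜 E] [FiniteDimensional 𝕜 E]
  [NormedAddCommGroup F] [InnerProductSpace 𝕜 F]
  {A : E →L[𝕜] F} {σ : ι → ℝ} {u : ι → F} {v : ι → E}

theorem IsSVD.of_finrank_eq_card (hu : Orthonormal 𝕜 u) (hv : Orthonormal 𝕜 v)
    (hσ : ∀ i, 0 ≤ σ i) (hcard : Fintype.card ι = finrank 𝕜 E)
    (hAv : ∀ i, A (v i) = (σ i : 𝕜) • u i) : IsSVD A σ u v where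
  left_orthonormal := hu
  right_orthonormal := hv
  nonneg := hσ
  eq_sum := by
    let b : OrthonormalBasis ι 𝕜 E :=
      .mk hv (hv.linearIndependent.span_eq_top_of_card_eq_finrank' hcard).ge
    have hb (i : ι) : b i = v i := congrFun (OrthonormalBasis.coe_mk hv _) i
    calc A = A ∘L ∑ i, rankOne 𝕜 (b i) (b i) := by
          rw [b.sum_rankOne_eq_id, ContinuousLinearMap.comp_id]
      _ = ∑ i, (σ i : 𝕜) • rankOne 𝕜 (u i) (v i) := by
          simp [ContinuousLinearMap.comp_finsetSum, comp_rankOne, hb, hAv]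

theorem IsSVD.of_card_eq_min_finrank [FiniteDimensional 𝕜 F] [CompleteSpace E] [CompleteSpace F]
    (hu : Orthonormal 𝕜 u) (hv : Orthonormal 𝕜 v) (hσ : ∀ i, 0 ≤ σ i)
    (hcard : Fintype.card ι = min (finrank 𝕜 E) (finrank 𝕜 F))
    (hAv : ∀ i, A (v i) = (σ i : 𝕜) • u i) (hAu : ∀ i, A.adjoint (u i) = (σ i : 𝕜) • v i) :
    IsSVD A σ u v := by
  rcases min_choice (finrank 𝕜 E) (finrank 𝕜 F) with hmin | hmin <;> rw [hmin] at hcard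
  · exact .of_finrank_eq_card hu hv hσ hcard hAv
  · simpa using (IsSVD.of_finrank_eq_card hv hu hσ hcard hAu).adjoint

end Completeness

section Matrices

open InnerProductSpace

variable {𝕜 : Type*} [RCLike 𝕜] {m n : ℕ}

/-- The operator between Euclidean spaces given by a matrix; its norm is `specNorm`. -/
noncomputable def euclideanCLM (M : Matrix (Fin m) (Fin n) 𝕜) :
    EuclideanSpace 𝕜 (Fin n) →L[𝕜] EuclideanSpace 𝕜 (Fin m) :=
  LinearMap.toContinuousLinearMap (Matrix.toEuclideanLin M)

theorem norm_euclideanCLM (M : Matrix (Fin m) (Fin n) 𝕜) : ‖euclideanCLM M‖ = specNorm M :=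
  rfl

theorem euclideanCLM_toLp (M : Matrix (Fin m) (Fin n) 𝕜) (x : Fin n → 𝕜) :
    euclideanCLM M (WithLp.toLp 2 x) = WithLp.toLp 2 (M *ᵥ x) :=
  rfl

theorem euclideanCLM_sub (M N : Matrix (Fin m) (Fin n) 𝕜) :
    euclideanCLM (M - N) = euclideanCLM M - euclideanCLM N := by
  simp only [euclideanCLM, map_sub]

theorem adjoint_euclideanCLM (M : Matrix (Fin m) (Fin n) 𝕜) :
    (euclideanCLM M).adjoint = euclideanCLM Mᴴ := by
  rw [euclideanCLM, euclideanCLM, Matrix.toEuclideanLin_conjTranspose_eq_adjoint]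
  rfl

theorem inner_toLp_eq_star_dotProduct (x y : Fin n → 𝕜) :
    inner 𝕜 (WithLp.toLp 2 x) (WithLp.toLp 2 y) = star x ⬝ᵥ y := by
  rw [EuclideanSpace.inner_toLp_toLp, dotProduct_comm]

theorem euclideanCLM_sum_vecMulVec {κ : Type*} (S : Finset κ) (u : κ → Fin n → 𝕜) :
    euclideanCLM (∑ i ∈ S, vecMulVec (u i) (star (u i)))
      = ∑ i ∈ S, rankOne 𝕜 (WithLp.toLp 2 (u i)) (WithLp.toLp 2 (u i)) := by
  simp only [euclideanCLM, map_sum]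
  refine Finset.sum_congr rfl fun i _ ↦ ?_
  have := symm_toEuclideanLin_rankOne (𝕜 := 𝕜) (WithLp.toLp 2 (u i))
    (WithLp.toLp 2 (u i))
  rw [← this, LinearEquiv.apply_symm_apply]
  rfl

theorem specNorm_sum_vecMulVec_sub {S I : Finset ℕ} {u u' : ℕ → Fin n → 𝕜} (hSI : S ⊆ I)
    (hu : Orthonormal 𝕜 fun i : I ↦ WithLp.toLp 2 (u i))
    (hu' : Orthonormal 𝕜 fun i : I ↦ WithLp.toLp 2 (u' i)) :
    specNorm ((∑ i ∈ S, vecMulVec (u' i) (star (u' i))) - ∑ i ∈ S, vecMulVec (u i) (star (u i)))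
      = ‖(modeSpan 𝕜 (fun i : I ↦ WithLp.toLp 2 (u' i)) (S.subtype (· ∈ I))).starProjection
          - (modeSpan 𝕜 (fun i : I ↦ WithLp.toLp 2 (u i)) (S.subtype (· ∈ I))).starProjection‖ := by
  have sum_subtype (w : ℕ → Fin n → 𝕜) :
      ∑ i ∈ S.subtype (· ∈ I), rankOne 𝕜 (WithLp.toLp 2 (w i)) (WithLp.toLp 2 (w i))
        = ∑ i ∈ S, rankOne 𝕜 (WithLp.toLp 2 (w i)) (WithLp.toLp 2 (w i)) :=
    Finset.sum_subtype_of_mem (fun i ↦ rankOne 𝕜 (WithLp.toLp 2 (w i)) (WithLp.toLp 2 (w i))) hSI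
  rw [← norm_euclideanCLM, euclideanCLM_sub, starProjection_modeSpan hu,
    starProjection_modeSpan hu', sum_subtype u, sum_subtype u', euclideanCLM_sum_vecMulVec,
    euclideanCLM_sum_vecMulVec]

/-- `σ`, `u`, `v` are the decreasingly ordered singular values and the left and right singular
vectors of `A`. Indices are 1-based, and only those in `[1, min m n]` are meaningful. -/
structure IsSingularSystem (A : Matrix (Fin m) (Fin n) 𝕜) (σ : ℕ → ℝ) (u : ℕ → Fin m → 𝕜)
    (v : ℕ → Fin n → 𝕜) : Prop where
  antitone : ∀ i ∈ Finset.Icc 1 (min m n), ∀ j ∈ Finset.Icc 1 (min m n), i ≤ j → σ j ≤ σ i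
  nonneg : ∀ i ∈ Finset.Icc 1 (min m n), 0 ≤ σ i
  left_orthonormal : ∀ i ∈ Finset.Icc 1 (min m n), ∀ j ∈ Finset.Icc 1 (min m n),
    star (u i) ⬝ᵥ u j = if i = j then 1 else 0
  right_orthonormal : ∀ i ∈ Finset.Icc 1 (min m n), ∀ j ∈ Finset.Icc 1 (min m n),
    star (v i) ⬝ᵥ v j = if i = j then 1 else 0
  mulVec : ∀ i ∈ Finset.Icc 1 (min m n), A *ᵥ v i = σ i • u i ∧ Aᴴ *ᵥ u i = σ i • v i

theorem orthonormal_toLp {I : Finset ℕ} {u : ℕ → Fin n → 𝕜}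
    (hu : ∀ i ∈ I, ∀ j ∈ I, star (u i) ⬝ᵥ u j = if i = j then 1 else 0) :
    Orthonormal 𝕜 fun i : I ↦ WithLp.toLp 2 (u i) := by
  rw [orthonormal_iff_ite]
  intro i j
  rw [inner_toLp_eq_star_dotProduct, hu i i.2 j j.2]
  simp only [Subtype.ext_iff]

theorem IsSingularSystem.isSVD {A : Matrix (Fin m) (Fin n) 𝕜} {σ : ℕ → ℝ} {u : ℕ → Fin m → 𝕜}
    {v : ℕ → Fin n → 𝕜} (h : IsSingularSystem A σ u v) :
    IsSVD (ι := Finset.Icc 1 (min m n)) (euclideanCLM A) (fun i ↦ σ i)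
      (fun i ↦ WithLp.toLp 2 (u i)) (fun i ↦ WithLp.toLp 2 (v i)) := by
  refine .of_card_eq_min_finrank (orthonormal_toLp h.left_orthonormal)
    (orthonormal_toLp h.right_orthonormal) (fun i ↦ h.nonneg i i.2) ?_ (fun i ↦ ?_) (fun i ↦ ?_)
  · simp [min_comm]
  · rw [euclideanCLM_toLp, (h.mulVec i i.2).1, RCLike.real_smul_eq_coe_smul (K := 𝕜),
      WithLp.toLp_smul]
  · rw [adjoint_euclideanCLM, euclideanCLM_toLp, (h.mulVec i i.2).2,
      RCLike.real_smul_eq_coe_smul (K := 𝕜), WithLp.toLp_smul]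

end Matrices

section RectangularMatrices

theorem add_le_mul_mul_log_add {a b δ t : ℝ} (ha : 0 ≤ a) (hb : 0 ≤ b) (hδ : 0 < δ)
    (hδt : δ ≤ t) : 16 / 3 * (a + b) ≤ 24 * √2 * (a * Real.log (6 * t / δ) + b) := by
  have one_le_log : 1 ≤ Real.log (6 * t / δ) := by
    rw [Real.le_log_iff_exp_le (by have := hδ.trans_le hδt; positivity), le_div_iff₀ hδ]
    nlinarith [Real.exp_one_lt_d9]
  have one_le_sqrt : 1 ≤ √2 := Real.one_le_sqrt.mpr one_le_two
  calc 16 / 3 * (a + b) ≤ 24 * √2 * (a + b) := by gcongr; linarith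
    _ ≤ 24 * √2 * (a * Real.log (6 * t / δ) + b) := by
      gcongr
      exact le_mul_of_one_le_right ha one_le_log

variable {𝕜 : Type*} [RCLike 𝕜] {m n : ℕ} {A E : Matrix (Fin m) (Fin n) 𝕜} {σ tσ : ℕ → ℝ}
  {u tu : ℕ → Fin m → 𝕜} {v tv : ℕ → Fin n → 𝕜}

theorem norm_starProjection_comp_euclideanCLM_le {I R : Finset ℕ} {x : ℝ}
    (hu : Orthonormal 𝕜 fun i : I ↦ WithLp.toLp 2 (u i))
    (hv : Orthonormal 𝕜 fun i : I ↦ WithLp.toLp 2 (v i)) (hRI : R ⊆ I)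
    (hx : ∀ i ∈ R, ∀ j ∈ R, ‖star (u i) ⬝ᵥ E *ᵥ v j‖ ≤ x) :
    ‖(modeSpan 𝕜 (fun i : I ↦ WithLp.toLp 2 (u i)) (R.subtype (· ∈ I))).starProjection ∘L
        euclideanCLM E ∘L
          (modeSpan 𝕜 (fun i : I ↦ WithLp.toLp 2 (v i)) (R.subtype (· ∈ I))).starProjection‖
      ≤ (R.card : ℝ) ^ 2 * x := by
  have card_subtype : (R.subtype (· ∈ I)).card = R.card := by
    rw [Finset.card_subtype, Finset.filter_true_of_mem hRI]
  rw [← card_subtype]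
  refine norm_starProjection_modeSpan_comp_le hu hv fun i hi j hj ↦ ?_
  rw [euclideanCLM_toLp, inner_toLp_eq_star_dotProduct]
  exact hx i (Finset.mem_subtype.mp hi) j (Finset.mem_subtype.mp hj)

theorem main_rectangular_general (hA : IsSingularSystem A σ u v)
    (hB : IsSingularSystem (A + E) tσ tu tv) {p r : ℕ} (hp : 1 ≤ p) (hpr : p ≤ r)
    (hr : r < min m n) (hr_half : σ p / 2 ≤ σ p - σ (r + 1)) {x : ℝ}
    (hx : ∀ i ∈ Finset.Icc 1 r, ∀ j ∈ Finset.Icc 1 r, ‖star (u i) ⬝ᵥ E *ᵥ v j‖ ≤ x)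
    (hgap_pos : 0 < σ p - σ (p + 1)) (hgap : 4 * specNorm E ≤ σ p - σ (p + 1)) :
    max
      (specNorm ((∑ i ∈ Finset.Icc 1 p, vecMulVec (tu i) (star (tu i)))
        - ∑ i ∈ Finset.Icc 1 p, vecMulVec (u i) (star (u i))))
      (specNorm ((∑ i ∈ Finset.Icc 1 p, vecMulVec (tv i) (star (tv i)))
        - ∑ i ∈ Finset.Icc 1 p, vecMulVec (v i) (star (v i))))
      ≤ 16 / 3 * (specNorm E / σ p + (r : ℝ) ^ 2 * x / (σ p - σ (p + 1))) := by
  have hSR : Finset.Icc 1 p ⊆ Finset.Icc 1 r := Finset.Icc_subset_Icc_right hpr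
  have hRI : Finset.Icc 1 r ⊆ Finset.Icc 1 (min m n) := Finset.Icc_subset_Icc_right hr.le
  have after_le {k : ℕ} (hk : k < min m n) (i : Finset.Icc 1 (min m n))
      (hi : i ∉ (Finset.Icc 1 k).subtype (· ∈ Finset.Icc 1 (min m n))) : σ i ≤ σ (k + 1) := by
    have := Finset.mem_Icc.mp i.2
    simp only [Finset.mem_subtype, Finset.mem_Icc] at hi
    exact hA.antitone _ (Finset.mem_Icc.mpr (by lia)) _ i.2 (by lia)
  have sub_eq : euclideanCLM (A + E) - euclideanCLM A = euclideanCLM E := by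
    rw [← euclideanCLM_sub, add_sub_cancel_left]
  have inner_block := norm_starProjection_comp_euclideanCLM_le
    hA.isSVD.left_orthonormal hA.isSVD.right_orthonormal hRI hx
  rw [Nat.card_Icc, Nat.add_sub_cancel] at inner_block
  rw [specNorm_sum_vecMulVec_sub (hSR.trans hRI) hA.isSVD.left_orthonormal
      hB.isSVD.left_orthonormal, specNorm_sum_vecMulVec_sub (hSR.trans hRI)
      hA.isSVD.right_orthonormal hB.isSVD.right_orthonormal, ← norm_euclideanCLM]
  refine (hA.isSVD.max_norm_modeSpan_sub_le hB.isSVD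
    (s := σ p) (δ := σ p - σ (p + 1)) (R := (Finset.Icc 1 r).subtype _) ?_ ?_ ?_ ?_ ?_ hgap_pos ?_
    ?_).trans ?_
  · intro i hi
    rw [Finset.mem_subtype, Finset.mem_Icc] at hi
    exact hA.antitone i i.2 p (Finset.mem_Icc.mpr (by lia)) hi.2
  · intro i hi
    linarith [after_le (by lia) i hi]
  · intro i hi
    linarith [after_le hr i hi]
  · exact Finset.subtype_mono hSR
  · intro i hi j hj
    have := Finset.mem_Icc.mp j.2
    simp only [Finset.mem_subtype, Finset.mem_Icc] at hi hj
    exact hB.antitone i i.2 j j.2 (by lia)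
  · linarith [hA.nonneg (p + 1) (Finset.mem_Icc.mpr (by lia))]
  · rwa [sub_eq, norm_euclideanCLM]
  · rw [sub_eq]
    gcongr

end RectangularMatrices

/-- **Perturbation of singular subspaces of a rectangular matrix** (Theorem 2.7 of
the paper). Indices are 1-based; `u_i, v_i` (resp. `ũ_i, ṽ_i`) are the left and
right singular vectors of `A` (resp. `Ã = A + E`) with singular values `σ_i`
(resp. `σ̃_i`). -/
theorem main_rectangular
    {m n : ℕ} (A E : Matrix (Fin m) (Fin n) ℝ)
    (σ tσ : ℕ → ℝ) (u tu : ℕ → (Fin m → ℝ)) (v tv : ℕ → (Fin n → ℝ))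
    (hσ_mono : ∀ i ∈ Finset.Icc 1 (min m n), ∀ j ∈ Finset.Icc 1 (min m n),
      i ≤ j → σ j ≤ σ i)
    (hσ_nonneg : ∀ i ∈ Finset.Icc 1 (min m n), 0 ≤ σ i)
    (htσ_mono : ∀ i ∈ Finset.Icc 1 (min m n), ∀ j ∈ Finset.Icc 1 (min m n),
      i ≤ j → tσ j ≤ tσ i)
    (htσ_nonneg : ∀ i ∈ Finset.Icc 1 (min m n), 0 ≤ tσ i)
    (hu_on : ∀ i ∈ Finset.Icc 1 (min m n), ∀ j ∈ Finset.Icc 1 (min m n),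
      u i ⬝ᵥ u j = if i = j then 1 else 0)
    (hv_on : ∀ i ∈ Finset.Icc 1 (min m n), ∀ j ∈ Finset.Icc 1 (min m n),
      v i ⬝ᵥ v j = if i = j then 1 else 0)
    (htu_on : ∀ i ∈ Finset.Icc 1 (min m n), ∀ j ∈ Finset.Icc 1 (min m n),
      tu i ⬝ᵥ tu j = if i = j then 1 else 0)
    (htv_on : ∀ i ∈ Finset.Icc 1 (min m n), ∀ j ∈ Finset.Icc 1 (min m n),
      tv i ⬝ᵥ tv j = if i = j then 1 else 0)
    (hsing : ∀ i ∈ Finset.Icc 1 (min m n),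
      A *ᵥ v i = σ i • u i ∧ Aᵀ *ᵥ u i = σ i • v i)
    (htsing : ∀ i ∈ Finset.Icc 1 (min m n),
      (A + E) *ᵥ tv i = tσ i • tu i ∧ (A + E)ᵀ *ᵥ tu i = tσ i • tv i)
    (rA : ℕ) (hrA : A.rank = rA)
    (p : ℕ) (hp1 : 1 ≤ p) (hprA : p < rA)
    (r : ℕ) (hpr : p ≤ r) (hrmn : r < min m n)
    (hr_half : σ p / 2 ≤ σ p - σ (r + 1))
    (xbar : ℝ)
    (hxbar : xbar = (Finset.Icc 1 r ×ˢ Finset.Icc 1 r).sup'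
      (Finset.Nonempty.product (Finset.nonempty_Icc.mpr (le_trans hp1 hpr))
        (Finset.nonempty_Icc.mpr (le_trans hp1 hpr)))
      (fun q => |u q.1 ⬝ᵥ E *ᵥ v q.2|))
    (δp : ℝ) (hδp : δp = σ p - σ (p + 1))
    (hE_pos : 0 < specNorm E)
    (hgap_lo : 4 * specNorm E ≤ δp) (hgap_hi : δp ≤ σ p / 4) :
    max
      (specNorm ((∑ i ∈ Finset.Icc 1 p, vecMulVec (tu i) (tu i))
        - ∑ i ∈ Finset.Icc 1 p, vecMulVec (u i) (u i)))
      (specNorm ((∑ i ∈ Finset.Icc 1 p, vecMulVec (tv i) (tv i))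
        - ∑ i ∈ Finset.Icc 1 p, vecMulVec (v i) (v i)))
      ≤ 24 * Real.sqrt 2 * (specNorm E / σ p * Real.log (6 * σ 1 / δp)
        + (r : ℝ) ^ 2 * xbar / δp) := by
  have hA : IsSingularSystem A σ u v := ⟨hσ_mono, hσ_nonneg, hu_on, hv_on, hsing⟩
  have hB : IsSingularSystem (A + E) tσ tu tv := ⟨htσ_mono, htσ_nonneg, htu_on, htv_on, htsing⟩
  have hx (i : ℕ) (hi : i ∈ Finset.Icc 1 r) (j : ℕ) (hj : j ∈ Finset.Icc 1 r) :
      |u i ⬝ᵥ E *ᵥ v j| ≤ xbar :=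
    hxbar ▸ Finset.le_sup' (fun q : ℕ × ℕ ↦ |u q.1 ⬝ᵥ E *ᵥ v q.2|) (Finset.mk_mem_product hi hj)
  have hmem {i : ℕ} (hi : 1 ≤ i) (hir : i ≤ r + 1) : i ∈ Finset.Icc 1 (min m n) :=
    Finset.mem_Icc.mpr ⟨hi, by lia⟩
  have hδ_pos : 0 < δp := by linarith
  have hδ_le : δp ≤ σ 1 := by
    linarith [hσ_nonneg (p + 1) (hmem (by lia) (by lia)),
      hσ_mono 1 (hmem le_rfl (by lia)) p (hmem hp1 (by lia)) hp1]
  have hx_nonneg : 0 ≤ xbar :=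
    (abs_nonneg _).trans (hx 1 (Finset.mem_Icc.mpr (by lia)) 1 (Finset.mem_Icc.mpr (by lia)))
  have hσp : 0 ≤ σ p := hσ_nonneg p (hmem hp1 (by lia))
  subst hδp
  exact (main_rectangular_general hA hB hp1 hpr hrmn hr_half hx hδ_pos hgap_lo).trans
    (add_le_mul_mul_log_add (by positivity) (by positivity) hδ_pos hδ_le)
end

section
/- Let 1 ≤ p < n and assume δ_p := λ_p − λ_{p+1} > 0 and δ_p ≥ 4‖E‖. Then ‖Π̃_p − Π_p‖ ≤ 2F₁, where F₁ = (1/(2π))(M₁ + M₂ + M₃ + M₄) is (2π)⁻¹ times the integral of ‖(zI − A)⁻¹ E (zI − A)⁻¹‖ over the rectangular contour with vertices x₀ ± iT and x₁ ± iT, where x₀ = λ_p − δ_p/2, x₁ = 2σ₁, T = 2σ₁. -/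
open Matrix

/-- The resolvent `(zI − A)⁻¹` of a real matrix `A`, regarded as a complex matrix. -/
noncomputable def res {n : ℕ} (A : Matrix (Fin n) (Fin n) ℝ) (z : ℂ) :
    Matrix (Fin n) (Fin n) ℂ :=
  (z • (1 : Matrix (Fin n) (Fin n) ℂ) - A.map Complex.ofReal)⁻¹

/-!
For a diagonalizable `A`, the contour integral of the resolvent `(ζ - A)⁻¹` is `2πi` times the sum
of the spectral projections whose eigenvalues lie inside the contour. On the given rectangle every
eigenvalue of `A` is at distance at least `δ / 2`, so `‖(ζ - A)⁻¹ E‖ ≤ (2 / δ) (δ / 4) = 1 / 2`, and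
the second resolvent identity bounds the difference `D` of the two resolvents by
`‖D‖ ≤ ‖(ζ - A)⁻¹ E (ζ - A)⁻¹‖ + ‖D‖ / 2`. By Weyl's inequality the rectangle encloses exactly the
top `p` eigenvalues of `A + E` too, so integrating this bound compares the two projections.
-/

section

open Set Complex InnerProductSpace
open scoped Interval

/-- The boundary of the rectangle with opposite corners `z` and `w`. -/
def rectBoundary (z w : ℂ) : Set ℂ :=
  ([[z.re, w.re]] ×ℂ {z.im, w.im}) ∪ ({z.re, w.re} ×ℂ [[z.im, w.im]])

/-- The integral of `f` counterclockwise along the boundary of the rectangle with lower left corner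
`z` and upper right corner `w`, written as in
`Complex.integral_boundary_rect_eq_zero_of_differentiableOn`. -/
noncomputable def rectIntegral {V : Type*} [NormedAddCommGroup V] [NormedSpace ℂ V]
    (f : ℂ → V) (z w : ℂ) : V :=
  (∫ x in z.re..w.re, f (x + z.im * I)) - (∫ x in z.re..w.re, f (x + w.im * I))
    + I • (∫ y in z.im..w.im, f (w.re + y * I)) - I • ∫ y in z.im..w.im, f (z.re + y * I)

/-- The integral of `g` with respect to arc length along the boundary of the rectangle with lower
left corner `z` and upper right corner `w`: left, top, right and bottom side, in this order. -/
noncomputable def rectArcIntegral (g : ℂ → ℝ) (z w : ℂ) : ℝ :=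
  (∫ y in z.im..w.im, g (z.re + y * I)) + (∫ x in z.re..w.re, g (x + w.im * I))
    + (∫ y in z.im..w.im, g (w.re + y * I)) + ∫ x in z.re..w.re, g (x + z.im * I)

section RectIntegral

theorem rectArcIntegral_const_mul (c : ℝ) (g : ℂ → ℝ) (z w : ℂ) :
    rectArcIntegral (fun ζ => c * g ζ) z w = c * rectArcIntegral g z w := by
  simp only [rectArcIntegral, intervalIntegral.integral_const_mul, mul_add]

variable {V : Type*} [NormedAddCommGroup V] {z w : ℂ}

theorem horizontal_mem_rectBoundary {x y : ℝ} (hx : x ∈ [[z.re, w.re]])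
    (hy : y ∈ ({z.im, w.im} : Set ℝ)) : (x + y * I : ℂ) ∈ rectBoundary z w :=
  Or.inl (by simpa [mem_reProdIm] using ⟨hx, hy⟩)

theorem vertical_mem_rectBoundary {x y : ℝ} (hx : x ∈ ({z.re, w.re} : Set ℝ))
    (hy : y ∈ [[z.im, w.im]]) : (x + y * I : ℂ) ∈ rectBoundary z w :=
  Or.inr (by simpa [mem_reProdIm] using ⟨hx, hy⟩)

theorem rectBoundary_subset : rectBoundary z w ⊆ [[z.re, w.re]] ×ℂ [[z.im, w.im]] := by
  rintro ζ (⟨hre, him⟩ | ⟨hre, him⟩)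
  · refine ⟨hre, ?_⟩
    rcases him with h | h <;> simp_all
  · refine ⟨?_, him⟩
    rcases hre with h | h <;> simp_all

theorem disjoint_rectBoundary_interior :
    Disjoint (rectBoundary z w) (Ioo z.re w.re ×ℂ Ioo z.im w.im) := by
  rw [Set.disjoint_left]
  rintro ζ (⟨-, h | h⟩ | ⟨h | h, -⟩) ⟨hre, him⟩ <;> simp_all

theorem intervalIntegrable_horizontal {f : ℂ → V} (hf : ContinuousOn f (rectBoundary z w)) {y : ℝ}
    (hy : y ∈ ({z.im, w.im} : Set ℝ)) :
    IntervalIntegrable (fun x : ℝ => f (x + y * I)) MeasureTheory.volume z.re w.re :=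
  (hf.comp (by fun_prop) fun _ hx => horizontal_mem_rectBoundary hx hy).intervalIntegrable

theorem intervalIntegrable_vertical {f : ℂ → V} (hf : ContinuousOn f (rectBoundary z w)) {x : ℝ}
    (hx : x ∈ ({z.re, w.re} : Set ℝ)) :
    IntervalIntegrable (fun y : ℝ => f (x + y * I)) MeasureTheory.volume z.im w.im :=
  (hf.comp (by fun_prop) fun _ hy => vertical_mem_rectBoundary hx hy).intervalIntegrable

variable [NormedSpace ℂ V]

theorem rectIntegral_congr {f g : ℂ → V} (h : EqOn f g (rectBoundary z w)) :
    rectIntegral f z w = rectIntegral g z w := by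
  have horizontal (y : ℝ) (hy : y ∈ ({z.im, w.im} : Set ℝ)) :
      ∫ x in z.re..w.re, f (x + y * I) = ∫ x in z.re..w.re, g (x + y * I) :=
    intervalIntegral.integral_congr fun _ hx => h (horizontal_mem_rectBoundary hx hy)
  have vertical (x : ℝ) (hx : x ∈ ({z.re, w.re} : Set ℝ)) :
      ∫ y in z.im..w.im, f (x + y * I) = ∫ y in z.im..w.im, g (x + y * I) :=
    intervalIntegral.integral_congr fun _ hy => h (vertical_mem_rectBoundary hx hy)
  rw [rectIntegral, horizontal z.im (by simp), horizontal w.im (by simp), vertical w.re (by simp),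
    vertical z.re (by simp), rectIntegral]

theorem rectIntegral_sub {f g : ℂ → V} (hf : ContinuousOn f (rectBoundary z w))
    (hg : ContinuousOn g (rectBoundary z w)) :
    rectIntegral (fun ζ => f ζ - g ζ) z w = rectIntegral f z w - rectIntegral g z w := by
  simp only [rectIntegral]
  rw [intervalIntegral.integral_sub, intervalIntegral.integral_sub,
    intervalIntegral.integral_sub, intervalIntegral.integral_sub]
  · simp only [smul_sub]
    abel
  all_goals
    first
    | exact intervalIntegrable_vertical ‹_› (by simp)
    | exact intervalIntegrable_horizontal ‹_› (by simp)

theorem rectIntegral_sum_smul [CompleteSpace V] {ι : Type*} {s : Finset ι}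
    {c : ι → ℂ → ℂ} (P : ι → V)
    (hc : ∀ i ∈ s, ContinuousOn (c i) (rectBoundary z w)) :
    rectIntegral (fun ζ => ∑ i ∈ s, c i ζ • P i) z w = ∑ i ∈ s, rectIntegral (c i) z w • P i := by
  have hcP : ∀ i ∈ s, ContinuousOn (fun ζ => c i ζ • P i) (rectBoundary z w) :=
    fun i hi => (hc i hi).smul continuousOn_const
  simp only [rectIntegral]
  have horizontal (y : ℝ) (hy : y ∈ ({z.im, w.im} : Set ℝ)) :=
    intervalIntegral.integral_finsetSum fun i hi => intervalIntegrable_horizontal (hcP i hi) hy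
  have vertical (x : ℝ) (hx : x ∈ ({z.re, w.re} : Set ℝ)) :=
    intervalIntegral.integral_finsetSum fun i hi => intervalIntegrable_vertical (hcP i hi) hx
  rw [horizontal z.im (by simp), horizontal w.im (by simp), vertical w.re (by simp),
    vertical z.re (by simp)]
  simp only [Finset.smul_sum, intervalIntegral.integral_smul_const, sub_smul, add_smul,
    Finset.sum_sub_distrib, Finset.sum_add_distrib, smul_assoc]

theorem norm_rectIntegral_le {f : ℂ → V} {g : ℂ → ℝ} (hre : z.re ≤ w.re) (him : z.im ≤ w.im)
    (hg : ContinuousOn g (rectBoundary z w)) (hfg : ∀ ζ ∈ rectBoundary z w, ‖f ζ‖ ≤ g ζ) :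
    ‖rectIntegral f z w‖ ≤ rectArcIntegral g z w := by
  have horizontal (y : ℝ) (hy : y ∈ ({z.im, w.im} : Set ℝ)) :
      ‖∫ x in z.re..w.re, f (x + y * I)‖ ≤ ∫ x in z.re..w.re, g (x + y * I) :=
    intervalIntegral.norm_integral_le_of_norm_le hre
      (.of_forall fun x hx => hfg _ (horizontal_mem_rectBoundary
        (Ioc_subset_Icc_self.trans Icc_subset_uIcc hx) hy))
      (intervalIntegrable_horizontal hg hy)
  have vertical (x : ℝ) (hx : x ∈ ({z.re, w.re} : Set ℝ)) :
      ‖I • ∫ y in z.im..w.im, f (x + y * I)‖ ≤ ∫ y in z.im..w.im, g (x + y * I) := by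
    rw [norm_smul, norm_I, one_mul]
    exact intervalIntegral.norm_integral_le_of_norm_le him
      (.of_forall fun y hy => hfg _ (vertical_mem_rectBoundary hx
        (Ioc_subset_Icc_self.trans Icc_subset_uIcc hy)))
      (intervalIntegrable_vertical hg hx)
  calc ‖rectIntegral f z w‖
      ≤ ‖∫ x in z.re..w.re, f (x + z.im * I)‖ + ‖∫ x in z.re..w.re, f (x + w.im * I)‖
          + ‖I • ∫ y in z.im..w.im, f (w.re + y * I)‖
          + ‖I • ∫ y in z.im..w.im, f (z.re + y * I)‖ :=
        (norm_sub_le _ _).trans <| add_le_add_left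
          ((norm_add_le _ _).trans <| add_le_add_left (norm_sub_le _ _) _) _
    _ ≤ rectArcIntegral g z w := by
        simp only [rectArcIntegral]
        linarith [horizontal z.im (by simp), horizontal w.im (by simp), vertical z.re (by simp),
          vertical w.re (by simp)]

end RectIntegral

section WindingNumber

variable {a z w : ℂ}

theorem rectIntegral_inv_sub_of_notMem (ha : a ∉ [[z.re, w.re]] ×ℂ [[z.im, w.im]]) :
    rectIntegral (fun ζ => (ζ - a)⁻¹) z w = 0 := by
  have hdiff : DifferentiableOn ℂ (fun ζ => (ζ - a)⁻¹) ([[z.re, w.re]] ×ℂ [[z.im, w.im]]) :=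
    fun ζ hζ => ((differentiableAt_id.sub_const a).inv
      (sub_ne_zero.mpr fun h => ha (h ▸ hζ))).differentiableWithinAt
  exact integral_boundary_rect_eq_zero_of_differentiableOn _ z w hdiff

theorem integral_div_eq_log_sub_log_of_mem_slitPlane {f f' : ℝ → ℂ} {s t : ℝ}
    (hf : ∀ x ∈ [[s, t]], HasDerivAt f (f' x) x) (hf' : ContinuousOn f' [[s, t]])
    (hslit : ∀ x ∈ [[s, t]], f x ∈ slitPlane) :
    ∫ x in s..t, f' x / f x = log (f t) - log (f s) :=
  intervalIntegral.integral_eq_sub_of_hasDerivAt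
    (fun x hx => (hf x hx).clog_real (hslit x hx))
    (hf'.div (fun x hx => (hf x hx).continuousAt.continuousWithinAt)
      fun x hx => slitPlane_ne_zero (hslit x hx)).intervalIntegrable

theorem log_eq_log_neg_add_pi_mul_I {ζ : ℂ} (hζ : 0 < ζ.im) : log ζ = log (-ζ) + Real.pi * I := by
  apply Complex.ext
  · simp [log_re]
  · simp [log_im, arg_neg_eq_arg_sub_pi_of_im_pos hζ]

theorem log_neg_eq_log_add_pi_mul_I {ζ : ℂ} (hζ : ζ.im < 0) : log (-ζ) = log ζ + Real.pi * I := by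
  simpa using log_eq_log_neg_add_pi_mul_I (ζ := -ζ) (by simpa using hζ)

theorem rectIntegral_inv_sub_of_mem (ha : a ∈ Ioo z.re w.re ×ℂ Ioo z.im w.im) :
    rectIntegral (fun ζ => (ζ - a)⁻¹) z w = 2 * Real.pi * I := by
  obtain ⟨⟨hz_re, hw_re⟩, hz_im, hw_im⟩ := ha
  have horizontal (y : ℝ) (hy : y ≠ a.im) :
      ∫ x in z.re..w.re, ((x : ℂ) + y * I - a)⁻¹
        = log (w.re + y * I - a) - log (z.re + y * I - a) := by
    have hderiv (x : ℝ) : HasDerivAt (fun x : ℝ => (x : ℂ) + y * I - a) 1 x :=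
      (ofRealCLM.hasDerivAt.add_const _).sub_const _
    rw [← integral_div_eq_log_sub_log_of_mem_slitPlane (fun x _ => hderiv x) continuousOn_const
      fun x _ => Or.inr (by simpa [sub_eq_zero] using hy)]
    simp only [one_div]
  have vertical {u : ℂ} {x : ℝ} (hu : ∀ y : ℝ, 0 < (u * (x + y * I - a)).re) :
      I * ∫ y in z.im..w.im, ((x : ℂ) + y * I - a)⁻¹
        = log (u * (x + w.im * I - a)) - log (u * (x + z.im * I - a)) := by
    have hu0 : u ≠ 0 := by rintro rfl; simpa using hu 0
    have hderiv (y : ℝ) : HasDerivAt (fun y : ℝ => u * ((x : ℂ) + y * I - a)) (u * I) y := by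
      simpa using (((ofRealCLM.hasDerivAt (x := y)).mul_const I).const_add (x : ℂ)
        |>.sub_const a).const_mul u
    rw [← integral_div_eq_log_sub_log_of_mem_slitPlane (fun y _ => hderiv y) continuousOn_const
      fun y _ => Or.inl (hu y), ← intervalIntegral.integral_const_mul]
    simp only [mul_div_mul_left _ _ hu0, div_eq_mul_inv]
  have hright := vertical (u := 1) (x := w.re) fun y => by simpa using hw_re
  have hleft := vertical (u := -1) (x := z.re) fun y => by simpa using hz_re
  have htop := log_eq_log_neg_add_pi_mul_I (ζ := z.re + w.im * I - a) (by simpa using hw_im)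
  have hbottom := log_neg_eq_log_add_pi_mul_I (ζ := z.re + z.im * I - a) (by simpa using hz_im)
  simp only [one_mul, neg_one_mul] at hright hleft
  rw [rectIntegral, smul_eq_mul, smul_eq_mul, hright, hleft, horizontal _ hz_im.ne,
    horizontal _ hw_im.ne', htop, hbottom]
  ring

end WindingNumber

section Resolvent

variable {𝒜 : Type*} [NormedRing 𝒜] [NormedAlgebra ℂ 𝒜] [CompleteSpace 𝒜] {a e : 𝒜} {ζ z w : ℂ}

theorem continuousOn_resolvent : ContinuousOn (resolvent a) (resolventSet ℂ a) :=
  fun _ hζ => (spectrum.hasDerivAt_resolvent_const_left hζ).continuousAt.continuousWithinAt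

theorem mem_resolventSet_add_of_norm_resolvent_mul_lt_one (hζ : ζ ∈ resolventSet ℂ a)
    (h : ‖resolvent a ζ * e‖ < 1) : ζ ∈ resolventSet ℂ (a + e) := by
  have hfactor : algebraMap ℂ 𝒜 ζ - (a + e)
      = (algebraMap ℂ 𝒜 ζ - a) * (1 - resolvent a ζ * e) := by
    rw [mul_sub, mul_one, resolvent, ← mul_assoc, Ring.mul_inverse_cancel _ hζ, one_mul,
      sub_sub]
  rw [spectrum.mem_resolventSet_iff, hfactor]
  exact hζ.mul (isUnit_one_sub_of_norm_lt_one h)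

theorem norm_resolvent_add_sub_resolvent_le (hζ : ζ ∈ resolventSet ℂ a)
    (h : ‖resolvent a ζ * e‖ ≤ 1 / 2) :
    ‖resolvent (a + e) ζ - resolvent a ζ‖ ≤ 2 * ‖resolvent a ζ * e * resolvent a ζ‖ := by
  have hζ' : ζ ∈ resolventSet ℂ (a + e) :=
    mem_resolventSet_add_of_norm_resolvent_mul_lt_one hζ (by linarith)
  set R := resolvent a ζ
  set D := resolvent (a + e) ζ - R
  have hD : D = R * e * R + R * e * D := by
    have hidentity : R - resolvent (a + e) ζ = R * (a - (a + e)) * resolvent (a + e) ζ :=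
      spectrum.resolvent_sub_resolvent hζ hζ'
    calc D = -(R - resolvent (a + e) ζ) := (neg_sub _ _).symm
      _ = R * e * resolvent (a + e) ζ := by rw [hidentity]; noncomm_ring
      _ = R * e * R + R * e * D := by rw [← mul_add, add_sub_cancel]
  have hnorm : ‖D‖ ≤ ‖R * e * R‖ + 1 / 2 * ‖D‖ :=
    calc ‖D‖ = ‖R * e * R + R * e * D‖ := congrArg _ hD
      _ ≤ ‖R * e * R‖ + ‖R * e‖ * ‖D‖ := (norm_add_le _ _).trans (by gcongr; exact norm_mul_le _ _)
      _ ≤ ‖R * e * R‖ + 1 / 2 * ‖D‖ := by gcongr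
  linarith

theorem norm_rectIntegral_resolvent_add_sub_le (hre : z.re ≤ w.re) (him : z.im ≤ w.im)
    (hres : rectBoundary z w ⊆ resolventSet ℂ a)
    (hsmall : ∀ ζ ∈ rectBoundary z w, ‖resolvent a ζ * e‖ ≤ 1 / 2) :
    ‖rectIntegral (resolvent (a + e)) z w - rectIntegral (resolvent a) z w‖
      ≤ 2 * rectArcIntegral (fun ζ => ‖resolvent a ζ * e * resolvent a ζ‖) z w := by
  have hres' : rectBoundary z w ⊆ resolventSet ℂ (a + e) := fun ζ hζ =>
    mem_resolventSet_add_of_norm_resolvent_mul_lt_one (hres hζ) (by linarith [hsmall ζ hζ])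
  have hcont : ContinuousOn (resolvent a) (rectBoundary z w) := continuousOn_resolvent.mono hres
  have hcont' : ContinuousOn (resolvent (a + e)) (rectBoundary z w) :=
    continuousOn_resolvent.mono hres'
  rw [← rectIntegral_sub hcont' hcont, ← rectArcIntegral_const_mul]
  exact norm_rectIntegral_le hre him
    (continuousOn_const.mul ((hcont.mul continuousOn_const).mul hcont).norm)
    fun ζ hζ => norm_resolvent_add_sub_resolvent_le (hres hζ) (hsmall ζ hζ)

end Resolvent

section SpectralDecomposition

/-- The open rectangle with lower left corner `z` and upper right corner `w` contains the values
`l i` with `i ∈ s`, and the closed rectangle contains none of the others. -/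
structure RectEncloses {ι : Type*} (z w : ℂ) (l : ι → ℂ) (s : Finset ι) : Prop where
  mem : ∀ i ∈ s, l i ∈ Ioo z.re w.re ×ℂ Ioo z.im w.im
  notMem : ∀ i ∉ s, l i ∉ [[z.re, w.re]] ×ℂ [[z.im, w.im]]

theorem RectEncloses.notMem_rectBoundary {ι : Type*} {z w : ℂ} {l : ι → ℂ} {s : Finset ι}
    (hl : RectEncloses z w l s) (i : ι) : l i ∉ rectBoundary z w := fun hi => by
  by_cases his : i ∈ s
  · exact disjoint_rectBoundary_interior.ne_of_mem hi (hl.mem i his) rfl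
  · exact hl.notMem i his (rectBoundary_subset hi)

section Algebraic

variable {𝕜 ι 𝒜 : Type*} [Field 𝕜] [Ring 𝒜] [Algebra 𝕜 𝒜] [Fintype ι] {P : ι → 𝒜} {l : ι → 𝕜}
  {ζ : 𝕜}

theorem sum_smul_mul_sum_smul (hP : CompleteOrthogonalIdempotents P) (c d : ι → 𝕜) :
    (∑ i, c i • P i) * ∑ i, d i • P i = ∑ i, (c i * d i) • P i := by
  classical
  simp only [Finset.sum_mul_sum, smul_mul_smul_comm, hP.mul_eq, smul_ite, smul_zero,
    Finset.sum_ite_eq, Finset.mem_univ, if_true]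

theorem algebraMap_sub_sum_smul (hP : CompleteOrthogonalIdempotents P) :
    algebraMap 𝕜 𝒜 ζ - ∑ i, l i • P i = ∑ i, (ζ - l i) • P i := by
  simp only [sub_smul, Finset.sum_sub_distrib, ← Finset.smul_sum, hP.complete,
    Algebra.algebraMap_eq_smul_one]

theorem algebraMap_sub_sum_smul_mul_sum_inv_smul (hP : CompleteOrthogonalIdempotents P)
    (hζ : ∀ i, l i ≠ ζ) :
    (algebraMap 𝕜 𝒜 ζ - ∑ i, l i • P i) * ∑ i, (ζ - l i)⁻¹ • P i = 1 := by
  simp only [algebraMap_sub_sum_smul hP, sum_smul_mul_sum_smul hP, ← hP.complete,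
    mul_inv_cancel₀ (sub_ne_zero.mpr (hζ _).symm), one_smul]

theorem sum_inv_smul_mul_algebraMap_sub_sum_smul (hP : CompleteOrthogonalIdempotents P)
    (hζ : ∀ i, l i ≠ ζ) :
    (∑ i, (ζ - l i)⁻¹ • P i) * (algebraMap 𝕜 𝒜 ζ - ∑ i, l i • P i) = 1 := by
  simp only [algebraMap_sub_sum_smul hP, sum_smul_mul_sum_smul hP, ← hP.complete,
    inv_mul_cancel₀ (sub_ne_zero.mpr (hζ _).symm), one_smul]

theorem mem_resolventSet_sum_smul (hP : CompleteOrthogonalIdempotents P) (hζ : ∀ i, l i ≠ ζ) :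
    ζ ∈ resolventSet 𝕜 (∑ i, l i • P i) :=
  spectrum.mem_resolventSet_of_left_right_inverse
    (algebraMap_sub_sum_smul_mul_sum_inv_smul hP hζ)
    (sum_inv_smul_mul_algebraMap_sub_sum_smul hP hζ)

theorem resolvent_sum_smul (hP : CompleteOrthogonalIdempotents P) (hζ : ∀ i, l i ≠ ζ) :
    resolvent (∑ i, l i • P i) ζ = ∑ i, (ζ - l i)⁻¹ • P i :=
  left_inv_eq_right_inv (Ring.inverse_mul_cancel _ (mem_resolventSet_sum_smul hP hζ))
    (algebraMap_sub_sum_smul_mul_sum_inv_smul hP hζ)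

end Algebraic

variable {ι 𝒜 : Type*} [Fintype ι] [NormedRing 𝒜] [NormedAlgebra ℂ 𝒜] [CompleteSpace 𝒜]
  {P Q : ι → 𝒜} {l m : ι → ℂ} {s : Finset ι} {z w : ℂ} {e : 𝒜}

theorem rectIntegral_resolvent_sum_smul (hP : CompleteOrthogonalIdempotents P)
    (hl : RectEncloses z w l s) :
    rectIntegral (resolvent (∑ i, l i • P i)) z w = (2 * Real.pi * I : ℂ) • ∑ i ∈ s, P i := by
  classical
  have hne (ζ) (hζ : ζ ∈ rectBoundary z w) (i : ι) : l i ≠ ζ :=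
    fun h => hl.notMem_rectBoundary i (h ▸ hζ)
  have hwinding (i : ι) :
      rectIntegral (fun ζ => (ζ - l i)⁻¹) z w = if i ∈ s then 2 * Real.pi * I else 0 := by
    split_ifs with hi
    · exact rectIntegral_inv_sub_of_mem (hl.mem i hi)
    · exact rectIntegral_inv_sub_of_notMem (hl.notMem i hi)
  have hcont (i : ι) : ContinuousOn (fun ζ => (ζ - l i)⁻¹) (rectBoundary z w) :=
    (continuousOn_id.sub continuousOn_const).inv₀ fun ζ hζ => sub_ne_zero.mpr (hne ζ hζ i).symm
  rw [rectIntegral_congr fun ζ hζ => resolvent_sum_smul hP (hne ζ hζ),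
    rectIntegral_sum_smul P fun i _ => hcont i]
  simp only [hwinding, ite_smul, zero_smul, Finset.sum_ite_mem, Finset.univ_inter, Finset.smul_sum]

theorem norm_sum_sub_sum_le_rectArcIntegral (hP : CompleteOrthogonalIdempotents P)
    (hQ : CompleteOrthogonalIdempotents Q) (hadd : ∑ i, m i • Q i = ∑ i, l i • P i + e)
    (hl : RectEncloses z w l s) (hm : RectEncloses z w m s) (hre : z.re ≤ w.re)
    (him : z.im ≤ w.im)
    (hsmall : ∀ ζ ∈ rectBoundary z w, ‖resolvent (∑ i, l i • P i) ζ * e‖ ≤ 1 / 2) :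
    ‖∑ i ∈ s, Q i - ∑ i ∈ s, P i‖ ≤ 2 * (1 / (2 * Real.pi) *
      rectArcIntegral (fun ζ => ‖resolvent (∑ i, l i • P i) ζ * e * resolvent (∑ i, l i • P i) ζ‖)
        z w) := by
  have hres : rectBoundary z w ⊆ resolventSet ℂ (∑ i, l i • P i) := fun ζ hζ =>
    mem_resolventSet_sum_smul hP fun i h => hl.notMem_rectBoundary i (h ▸ hζ)
  have hbound := norm_rectIntegral_resolvent_add_sub_le hre him hres hsmall
  rw [← hadd, rectIntegral_resolvent_sum_smul hQ hm, rectIntegral_resolvent_sum_smul hP hl,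
    ← smul_sub, norm_smul] at hbound
  have hnorm : ‖(2 * Real.pi * I : ℂ)‖ = 2 * Real.pi := by
    simp [abs_of_pos Real.pi_pos]
  rw [hnorm, mul_comm, ← le_div_iff₀ Real.two_pi_pos] at hbound
  exact hbound.trans_eq (by ring)

end SpectralDecomposition

section Eigenbasis

variable {𝕜 V ι : Type*} [RCLike 𝕜] [NormedAddCommGroup V] [InnerProductSpace 𝕜 V] [Fintype ι]
  (b : OrthonormalBasis ι 𝕜 V)

theorem completeOrthogonalIdempotents_rankOne :
    CompleteOrthogonalIdempotents fun i => rankOne 𝕜 (b i) (b i) where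
  idem i := isIdempotentElem_rankOne_self (b.norm_eq_one i)
  ortho i j hij := by
    simp only [ContinuousLinearMap.mul_def, rankOne_comp_rankOne, b.inner_eq_zero hij, zero_smul]
  complete := b.sum_rankOne_eq_id

theorem eq_sum_smul_rankOne {S : V →L[𝕜] V} {l : ι → 𝕜} (hS : ∀ i, S (b i) = l i • b i) :
    S = ∑ i, l i • rankOne 𝕜 (b i) (b i) :=
  calc S = S ∘L ∑ i, rankOne 𝕜 (b i) (b i) := by rw [b.sum_rankOne_eq_id]; rfl
    _ = ∑ i, l i • rankOne 𝕜 (b i) (b i) := by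
      simp only [ContinuousLinearMap.comp_finsetSum, comp_rankOne, hS, map_smul,
        _root_.smul_apply]

theorem norm_sum_smul_rankOne_le {c : ι → 𝕜} {K : ℝ} (hK : 0 ≤ K) (hc : ∀ i, ‖c i‖ ≤ K) :
    ‖∑ i, c i • rankOne 𝕜 (b i) (b i)‖ ≤ K := by
  refine ContinuousLinearMap.opNorm_le_bound _ hK fun x => ?_
  rw [← sq_le_sq₀ (norm_nonneg _) (by positivity), mul_pow, ← b.sum_sq_norm_inner_right,
    ← b.sum_sq_norm_inner_right x, Finset.mul_sum]
  refine Finset.sum_le_sum fun i _ => ?_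
  have hcoord : inner 𝕜 (b i) ((∑ j, c j • rankOne 𝕜 (b j) (b j)) x) = c i * inner 𝕜 (b i) x := by
    classical
    simp [inner_sum, inner_smul_right, b.inner_eq_ite]
  rw [hcoord, norm_mul, mul_pow]
  gcongr
  exact hc i

theorem re_inner_apply_self_eq_sum {S : V →L[𝕜] V} {l : ι → ℝ}
    (hS : ∀ i, S (b i) = (l i : 𝕜) • b i) (x : V) :
    RCLike.re (inner 𝕜 x (S x)) = ∑ i, l i * ‖inner 𝕜 (b i) x‖ ^ 2 := by
  rw [eq_sum_smul_rankOne b hS, _root_.sum_apply, inner_sum, map_sum]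
  refine Finset.sum_congr rfl fun i _ => ?_
  rw [_root_.smul_apply, rankOne_apply, inner_smul_right, inner_smul_right,
    RCLike.re_ofReal_mul, inner_mul_symm_re_eq_norm, norm_mul, norm_inner_symm x, sq]

end Eigenbasis

section Weyl

variable {𝕜 V ι : Type*} [RCLike 𝕜] [NormedAddCommGroup V] [InnerProductSpace 𝕜 V]

theorem exists_ne_zero_forall_inner_eq_zero [FiniteDimensional 𝕜 V] {κ : Type*} [Fintype κ]
    (v : κ → V) (hcard : Fintype.card κ < Module.finrank 𝕜 V) :
    ∃ x ≠ 0, ∀ k, inner 𝕜 (v k) x = 0 := by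
  have hker : LinearMap.ker (LinearMap.pi fun k => (innerSL 𝕜 (v k)).toLinearMap) ≠ ⊥ :=
    LinearMap.ker_ne_bot_of_finrank_lt (by simpa using hcard)
  obtain ⟨x, hx, hx0⟩ := Submodule.exists_mem_ne_zero_of_ne_bot hker
  exact ⟨x, hx0, fun k => congrFun (LinearMap.mem_ker.mp hx) k⟩

variable [Fintype ι] [LinearOrder ι] {b b' : OrthonormalBasis ι 𝕜 V} {S T : V →L[𝕜] V}
  {l m : ι → ℝ}

theorem eigenvalue_le_add_norm_sub (hl : Antitone l) (hm : Antitone m)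
    (hS : ∀ i, S (b i) = (l i : 𝕜) • b i) (hT : ∀ i, T (b' i) = (m i : 𝕜) • b' i) (p : ι) :
    l p ≤ m p + ‖S - T‖ := by
  have : FiniteDimensional 𝕜 V := b.toBasis.finiteDimensional_of_finite
  obtain ⟨x, hx0, hx⟩ := exists_ne_zero_forall_inner_eq_zero (𝕜 := 𝕜)
    (fun i : {i // i ≠ p} => if p < i then b i else b' i) (by
      rw [Module.finrank_eq_card_basis b.toBasis]
      exact Fintype.card_subtype_lt (x := p) (by simp))
  have hx_above (i : ι) (hi : p < i) : inner 𝕜 (b i) x = 0 := by simpa [hi] using hx ⟨i, hi.ne'⟩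
  have hx_below (i : ι) (hi : i < p) : inner 𝕜 (b' i) x = 0 := by
    simpa [hi.not_gt] using hx ⟨i, hi.ne⟩
  have hlower : l p * ‖x‖ ^ 2 ≤ RCLike.re (inner 𝕜 x (S x)) := by
    rw [re_inner_apply_self_eq_sum b hS, ← b.sum_sq_norm_inner_right, Finset.mul_sum]
    refine Finset.sum_le_sum fun i _ => ?_
    rcases le_or_gt i p with hi | hi
    · gcongr
      exact hl hi
    · simp [hx_above i hi]
  have hupper : RCLike.re (inner 𝕜 x (T x)) ≤ m p * ‖x‖ ^ 2 := by
    rw [re_inner_apply_self_eq_sum b' hT, ← b'.sum_sq_norm_inner_right, Finset.mul_sum]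
    refine Finset.sum_le_sum fun i _ => ?_
    rcases le_or_gt p i with hi | hi
    · gcongr
      exact hm hi
    · simp [hx_below i hi]
  have hdiff : RCLike.re (inner 𝕜 x (S x)) - RCLike.re (inner 𝕜 x (T x)) ≤ ‖S - T‖ * ‖x‖ ^ 2 :=
    calc _ = RCLike.re (inner 𝕜 x ((S - T) x)) := by
          rw [_root_.sub_apply, inner_sub_right, map_sub]
      _ ≤ ‖x‖ * ‖(S - T) x‖ := re_inner_le_norm _ _
      _ ≤ ‖x‖ * (‖S - T‖ * ‖x‖) := by gcongr; exact (S - T).le_opNorm x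
      _ = ‖S - T‖ * ‖x‖ ^ 2 := by ring
  refine le_of_mul_le_mul_right ?_ (pow_pos (norm_pos_iff.mpr hx0) 2)
  linarith

theorem abs_eigenvalue_sub_le (hl : Antitone l) (hm : Antitone m)
    (hS : ∀ i, S (b i) = (l i : 𝕜) • b i) (hT : ∀ i, T (b' i) = (m i : 𝕜) • b' i) (p : ι) :
    |l p - m p| ≤ ‖S - T‖ := by
  rw [abs_sub_le_iff]
  constructor
  · linarith [eigenvalue_le_add_norm_sub hl hm hS hT p]
  · linarith [eigenvalue_le_add_norm_sub hm hl hT hS p, norm_sub_rev S T]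

end Weyl

theorem le_norm_sub_of_mem_rectBoundary {a z w ζ : ℂ} {d : ℝ} (hζ : ζ ∈ rectBoundary z w)
    (hz_re : d ≤ |z.re - a.re|) (hw_re : d ≤ |w.re - a.re|)
    (hz_im : d ≤ |z.im - a.im|) (hw_im : d ≤ |w.im - a.im|) : d ≤ ‖ζ - a‖ := by
  have hre := abs_re_le_norm (ζ - a)
  have him := abs_im_le_norm (ζ - a)
  rw [sub_re] at hre
  rw [sub_im] at him
  rcases hζ with ⟨-, h | h⟩ | ⟨h | h, -⟩ <;>
    [rw [h] at him; rw [h] at him; rw [h] at hre; rw [h] at hre] <;> linarith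

theorem rectEncloses_of_abs_sub_lt {ι : Type*} [Fintype ι] [LinearOrder ι] {l m : ι → ℝ}
    {p q : ι} {δ x₀ x₁ T : ℝ} (hl : Antitone l) (hpq : p ⋖ q) (hδ : δ = l p - l q)
    (hx₀ : x₀ = l p - δ / 2) (hx₁ : ∀ i, l i + δ / 2 ≤ x₁) (hT : 0 < T)
    (hm : ∀ i, |l i - m i| < δ / 2) :
    RectEncloses ⟨x₀, -T⟩ ⟨x₁, T⟩ (fun i => (m i : ℂ)) {i | i ≤ p} where
  mem i hi := by
    have hli : l p ≤ l i := hl (by simpa using hi)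
    obtain ⟨hlt, hgt⟩ := abs_lt.mp (hm i)
    refine ⟨⟨?_, ?_⟩, ?_, ?_⟩ <;> simp only [ofReal_re, ofReal_im] <;> linarith [hx₁ i]
  notMem i hi := by
    have hli : l i ≤ l q := hl (hpq.ge_of_gt (by simpa using hi))
    rintro ⟨h, -⟩
    obtain ⟨hlt, hgt⟩ := abs_lt.mp (hm i)
    rw [uIcc_of_le (by simp only; linarith [hx₁ p])] at h
    have := h.1
    simp only [ofReal_re] at this
    linarith

theorem norm_resolvent_sum_smul_rankOne_le {V ι : Type*} [NormedAddCommGroup V]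
    [InnerProductSpace ℂ V] [Fintype ι] (b : OrthonormalBasis ι ℂ V) {l : ι → ℂ} {ζ : ℂ} {d : ℝ}
    (hd : 0 < d) (hζ : ∀ i, d ≤ ‖ζ - l i‖) :
    ‖resolvent (∑ i, l i • rankOne ℂ (b i) (b i)) ζ‖ ≤ d⁻¹ := by
  have hne (i : ι) : l i ≠ ζ := fun h => by simpa [h, hd.not_ge] using hζ i
  rw [resolvent_sum_smul (completeOrthogonalIdempotents_rankOne b) hne]
  refine norm_sum_smul_rankOne_le b (by positivity) fun i => ?_
  rw [norm_inv]
  exact inv_anti₀ hd (hζ i)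

theorem key_lemma_bootstrapping_general {V ι : Type*} [NormedAddCommGroup V]
    [InnerProductSpace ℂ V] [Fintype ι] [LinearOrder ι] (b b' : OrthonormalBasis ι ℂ V)
    {a e : V →L[ℂ] V} {l l' : ι → ℝ} (hl : Antitone l) (hl' : Antitone l')
    (ha : ∀ i, a (b i) = (l i : ℂ) • b i) (hae : ∀ i, (a + e) (b' i) = (l' i : ℂ) • b' i)
    {p q : ι} (hpq : p ⋖ q) {δ x₀ x₁ T : ℝ} (hδ : δ = l p - l q) (hδ_pos : 0 < δ)
    (hgap : 4 * ‖e‖ ≤ δ) (hx₀ : x₀ = l p - δ / 2) (hx₁ : ∀ i, l i + δ / 2 ≤ x₁)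
    (hT : δ / 2 ≤ T) :
    ‖(∑ i with i ≤ p, rankOne ℂ (b' i) (b' i)) - ∑ i with i ≤ p, rankOne ℂ (b i) (b i)‖
      ≤ 2 * (1 / (2 * Real.pi) * rectArcIntegral
        (fun ζ => ‖resolvent a ζ * e * resolvent a ζ‖) ⟨x₀, -T⟩ ⟨x₁, T⟩) := by
  have : FiniteDimensional ℂ V := b.toBasis.finiteDimensional_of_finite
  have : CompleteSpace V := FiniteDimensional.complete ℂ V
  have hweyl (i : ι) : |l i - l' i| < δ / 2 :=
    calc |l i - l' i| ≤ ‖a - (a + e)‖ := abs_eigenvalue_sub_le hl hl' ha hae i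
      _ = ‖e‖ := by rw [sub_add_cancel_left, norm_neg]
      _ < δ / 2 := by linarith
  have hdist (i : ι) (ζ) (hζ : ζ ∈ rectBoundary ⟨x₀, -T⟩ ⟨x₁, T⟩) : δ / 2 ≤ ‖ζ - l i‖ := by
    apply le_norm_sub_of_mem_rectBoundary hζ <;> simp only [ofReal_re, ofReal_im, le_abs]
    · rcases le_or_gt i p with hi | hi
      · right; linarith [hl hi]
      · left; linarith [hl (hpq.ge_of_gt hi)]
    · left; linarith [hx₁ i]
    · right; linarith
    · left; linarith
  have hsmall (ζ) (hζ : ζ ∈ rectBoundary ⟨x₀, -T⟩ ⟨x₁, T⟩) :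
      ‖resolvent (∑ i, (l i : ℂ) • rankOne ℂ (b i) (b i)) ζ * e‖ ≤ 1 / 2 :=
    calc _ ≤ (δ / 2)⁻¹ * (δ / 4) := (norm_mul_le _ _).trans <| by
          gcongr
          · exact norm_resolvent_sum_smul_rankOne_le b (by linarith) fun i => hdist i ζ hζ
          · linarith
      _ = 1 / 2 := by field_simp; norm_num
  have ha_sum := eq_sum_smul_rankOne b ha
  have hadd := eq_sum_smul_rankOne b' hae
  rw [ha_sum] at hadd ⊢
  exact norm_sum_sub_sum_le_rectArcIntegral (completeOrthogonalIdempotents_rankOne b)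
    (completeOrthogonalIdempotents_rankOne b') hadd.symm
    (rectEncloses_of_abs_sub_lt hl hpq hδ hx₀ hx₁ (by linarith) fun i => by simp [hδ_pos])
    (rectEncloses_of_abs_sub_lt hl hpq hδ hx₀ hx₁ (by linarith) hweyl)
    (by simp only; linarith [hx₁ p]) (by simp only; linarith) hsmall

section Complexification

variable {κ : Type*}

/-- A real vector, regarded as a vector of the complex Euclidean space. -/
noncomputable def complexVec (v : κ → ℝ) : EuclideanSpace ℂ κ :=
  WithLp.toLp 2 fun i => (v i : ℂ)

theorem complexVec_smul (c : ℝ) (v : κ → ℝ) : complexVec (c • v) = (c : ℂ) • complexVec v := by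
  ext i
  simp [complexVec]

variable [Fintype κ]

theorem inner_complexVec (v w : κ → ℝ) :
    inner ℂ (complexVec v) (complexVec w) = ((v ⬝ᵥ w : ℝ) : ℂ) := by
  simp [complexVec, PiLp.inner_apply, dotProduct, mul_comm]

theorem norm_complexVec (v : κ → ℝ) : ‖complexVec v‖ = ‖WithLp.toLp 2 v‖ := by
  simp [complexVec, EuclideanSpace.norm_eq]

theorem norm_sq_eq_norm_sq_re_add_norm_sq_im (x : EuclideanSpace ℂ κ) :
    ‖x‖ ^ 2 = ‖WithLp.toLp 2 fun i => (x i).re‖ ^ 2 + ‖WithLp.toLp 2 fun i => (x i).im‖ ^ 2 := by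
  simp only [EuclideanSpace.norm_sq_eq, ← Finset.sum_add_distrib, Complex.sq_norm, normSq_apply,
    Real.norm_eq_abs, sq_abs, ← sq]

theorem exists_orthonormalBasis_complexVec {ι : Type*} [Fintype ι] [DecidableEq ι]
    {u : ι → κ → ℝ} (hu : ∀ i j, u i ⬝ᵥ u j = if i = j then 1 else 0)
    (hcard : Fintype.card ι = Fintype.card κ) :
    ∃ b : OrthonormalBasis ι ℂ (EuclideanSpace ℂ κ), ∀ i, b i = complexVec (u i) := by
  have hon : Orthonormal ℂ fun i => complexVec (u i) :=
    orthonormal_iff_ite.mpr fun i j => by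
      rw [inner_complexVec, hu]
      split_ifs <;> simp
  have hspan : ⊤ ≤ Submodule.span ℂ (Set.range fun i => complexVec (u i)) :=
    (hon.linearIndependent.span_eq_top_of_card_eq_finrank' (by simpa using hcard)).ge
  exact ⟨OrthonormalBasis.mk hon hspan, fun i => by rw [OrthonormalBasis.coe_mk]⟩

variable [DecidableEq κ]

/-- The operator on the complex Euclidean space given by a real matrix. -/
noncomputable def complexCLM :
    Matrix κ κ ℝ →+* EuclideanSpace ℂ κ →L[ℂ] EuclideanSpace ℂ κ :=
  (toEuclideanCLM (n := κ) (𝕜 := ℂ) : _ →+* _).comp ofRealHom.mapMatrix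

theorem complexCLM_apply (X : Matrix κ κ ℝ) :
    complexCLM X = toEuclideanCLM (𝕜 := ℂ) (X.map ofReal) :=
  rfl

theorem complexCLM_complexVec (X : Matrix κ κ ℝ) (v : κ → ℝ) :
    complexCLM X (complexVec v) = complexVec (X *ᵥ v) := by
  ext i
  simp [complexCLM_apply, complexVec, mulVec, dotProduct]

theorem complexCLM_vecMulVec (v w : κ → ℝ) :
    complexCLM (vecMulVec v w) = rankOne ℂ (complexVec v) (complexVec w) := by
  ext x i
  simp [complexCLM_apply, complexVec, mulVec, dotProduct, vecMulVec_apply, PiLp.inner_apply,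
    Finset.mul_sum, mul_comm, mul_assoc]

theorem norm_complexCLM (X : Matrix κ κ ℝ) :
    ‖complexCLM X‖ = ‖toEuclideanCLM (𝕜 := ℝ) X‖ := by
  set N := ‖toEuclideanCLM (𝕜 := ℝ) X‖
  have hreal (v : κ → ℝ) : ‖WithLp.toLp 2 (X *ᵥ v)‖ ≤ N * ‖WithLp.toLp 2 v‖ :=
    (toEuclideanCLM (𝕜 := ℝ) X).le_opNorm (WithLp.toLp 2 v)
  apply le_antisymm
  · refine ContinuousLinearMap.opNorm_le_bound _ (norm_nonneg _) fun x => ?_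
    have hre : (fun i => (complexCLM X x i).re) = X *ᵥ fun i => (x i).re := by
      ext i
      simp [complexCLM_apply, mulVec, dotProduct]
    have him : (fun i => (complexCLM X x i).im) = X *ᵥ fun i => (x i).im := by
      ext i
      simp [complexCLM_apply, mulVec, dotProduct]
    rw [← sq_le_sq₀ (norm_nonneg _) (by positivity), mul_pow,
      norm_sq_eq_norm_sq_re_add_norm_sq_im x, norm_sq_eq_norm_sq_re_add_norm_sq_im, hre, him,
      mul_add, ← mul_pow, ← mul_pow]
    gcongr <;> exact hreal _
  · refine ContinuousLinearMap.opNorm_le_bound _ (norm_nonneg _) fun v => ?_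
    have hv := (complexCLM X).le_opNorm (complexVec v)
    rwa [complexCLM_complexVec, norm_complexVec, norm_complexVec] at hv

end Complexification

section MatrixBridge

theorem map_ringInverse {F R S : Type*} [MonoidWithZero R] [MonoidWithZero S] [EquivLike F R S]
    [MulEquivClass F R S] (f : F) (x : R) : f (Ring.inverse x) = Ring.inverse (f x) := by
  by_cases hx : IsUnit x
  · obtain ⟨y, rfl⟩ := hx
    rw [Ring.inverse_unit]
    exact (Ring.inverse_unit (Units.map (f : R →* S) y)).symm
  · rw [Ring.inverse_non_unit _ hx, Ring.inverse_non_unit _ (by simpa using hx), map_zero]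

variable {n : ℕ}

theorem specNorm_eq_norm_toEuclideanCLM {𝕜 : Type*} [RCLike 𝕜] (M : Matrix (Fin n) (Fin n) 𝕜) :
    specNorm M = ‖toEuclideanCLM (𝕜 := 𝕜) M‖ :=
  rfl

theorem specNorm_eq_norm_complexCLM (X : Matrix (Fin n) (Fin n) ℝ) :
    specNorm X = ‖complexCLM X‖ :=
  (norm_complexCLM X).symm

theorem resolvent_complexCLM (A : Matrix (Fin n) (Fin n) ℝ) (ζ : ℂ) :
    resolvent (complexCLM A) ζ = toEuclideanCLM (𝕜 := ℂ) (res A ζ) := by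
  rw [res, nonsing_inv_eq_ringInverse, map_ringInverse, map_sub, map_smul, map_one,
    resolvent, Algebra.algebraMap_eq_smul_one, complexCLM_apply]

theorem norm_resolvent_mul_complexCLM_mul_resolvent (A E : Matrix (Fin n) (Fin n) ℝ) (ζ : ℂ) :
    ‖resolvent (complexCLM A) ζ * complexCLM E * resolvent (complexCLM A) ζ‖
      = specNorm (res A ζ * E.map ofReal * res A ζ) := by
  rw [resolvent_complexCLM, complexCLM_apply, ← map_mul, ← map_mul,
    specNorm_eq_norm_toEuclideanCLM]

theorem exists_orthonormalBasis_eigenvectors {A : Matrix (Fin n) (Fin n) ℝ} {lam : ℕ → ℝ}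
    {u : ℕ → Fin n → ℝ} (hu_on : ∀ i ∈ Finset.Icc 1 n, ∀ j ∈ Finset.Icc 1 n,
      u i ⬝ᵥ u j = if i = j then 1 else 0)
    (hu_eig : ∀ i ∈ Finset.Icc 1 n, A *ᵥ u i = lam i • u i) :
    ∃ b : OrthonormalBasis (Finset.Icc 1 n) ℂ (EuclideanSpace ℂ (Fin n)),
      (∀ i, b i = complexVec (u i)) ∧ ∀ i, complexCLM A (b i) = (lam i : ℂ) • b i := by
  obtain ⟨b, hb⟩ := exists_orthonormalBasis_complexVec (u := fun i : Finset.Icc 1 n => u i)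
    (fun i j => by simpa only [Subtype.ext_iff] using hu_on i i.2 j j.2) (by simp)
  exact ⟨b, hb, fun i => by rw [hb, complexCLM_complexVec, hu_eig i i.2, complexVec_smul]⟩

end MatrixBridge

theorem norm_le_opNorm_of_apply_eq_smul {𝕜 V : Type*} [NontriviallyNormedField 𝕜]
    [NormedAddCommGroup V] [NormedSpace 𝕜 V] {a : V →L[𝕜] V} {c : 𝕜} {v : V} (hv : ‖v‖ = 1)
    (h : a v = c • v) : ‖c‖ ≤ ‖a‖ := by
  simpa [h, norm_smul, hv] using a.le_opNorm v

section IccIndex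

variable {n p : ℕ}

theorem covBy_subtype_Icc (hp : p ∈ Finset.Icc 1 n) (hp' : p + 1 ∈ Finset.Icc 1 n) :
    (⟨p, hp⟩ : Finset.Icc 1 n) ⋖ ⟨p + 1, hp'⟩ :=
  ⟨Subtype.mk_lt_mk.mpr p.lt_succ_self, fun i hpi hip => by
    have hpi : p < i := hpi
    have hip : i < p + 1 := hip
    omega⟩

theorem sum_subtype_Icc_filter_le {M : Type*} [AddCommMonoid M] (hp : p ∈ Finset.Icc 1 n)
    (f : ℕ → M) : ∑ i : Finset.Icc 1 n with i ≤ ⟨p, hp⟩, f i = ∑ i ∈ Finset.Icc 1 p, f i := by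
  have hfilter : {i ∈ Finset.Icc 1 n | i ≤ p} = Finset.Icc 1 p := by
    ext i
    simp only [Finset.mem_filter, Finset.mem_Icc] at hp ⊢
    omega
  rw [← hfilter, Finset.sum_filter, Finset.sum_filter,
    ← Finset.sum_coe_sort _ fun i => if i ≤ p then f i else 0]
  simp only [← Subtype.coe_le_coe]

theorem sum_filter_rankOne_complexVec (hp : p ∈ Finset.Icc 1 n)
    {κ : Type*} [Fintype κ] [DecidableEq κ] (u : ℕ → κ → ℝ) :
    ∑ i : Finset.Icc 1 n with i ≤ ⟨p, hp⟩, rankOne ℂ (complexVec (u i)) (complexVec (u i))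
      = complexCLM (∑ i ∈ Finset.Icc 1 p, vecMulVec (u i) (u i)) := by
  simp only [map_sum, complexCLM_vecMulVec]
  exact sum_subtype_Icc_filter_le hp fun i => rankOne ℂ (complexVec (u i)) (complexVec (u i))

end IccIndex

end

/-- **Key lemma (contour bootstrapping).** If `δ_p ≥ 4‖E‖` then
`‖Π̃_p − Π_p‖ ≤ 2F₁`. (Indices are 1-based; `σ₁ = ‖A‖`, `x₀ = λ_p − δ_p/2`,
`x₁ = T = 2σ₁`.) -/
theorem key_lemma_bootstrapping
    {n : ℕ} (A E : Matrix (Fin n) (Fin n) ℝ) (hA : A.IsSymm) (hE : E.IsSymm)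
    (lam tlam : ℕ → ℝ) (u tu : ℕ → (Fin n → ℝ))
    (hlam_mono : ∀ i ∈ Finset.Icc 1 n, ∀ j ∈ Finset.Icc 1 n, i ≤ j → lam j ≤ lam i)
    (htlam_mono : ∀ i ∈ Finset.Icc 1 n, ∀ j ∈ Finset.Icc 1 n, i ≤ j → tlam j ≤ tlam i)
    (hu_on : ∀ i ∈ Finset.Icc 1 n, ∀ j ∈ Finset.Icc 1 n,
      u i ⬝ᵥ u j = if i = j then 1 else 0)
    (htu_on : ∀ i ∈ Finset.Icc 1 n, ∀ j ∈ Finset.Icc 1 n,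
      tu i ⬝ᵥ tu j = if i = j then 1 else 0)
    (hu_eig : ∀ i ∈ Finset.Icc 1 n, A *ᵥ u i = lam i • u i)
    (htu_eig : ∀ i ∈ Finset.Icc 1 n, (A + E) *ᵥ tu i = tlam i • tu i)
    (p : ℕ) (hp1 : 1 ≤ p) (hpn : p < n)
    (δp : ℝ) (hδp : δp = lam p - lam (p + 1))
    (hδp_pos : 0 < δp) (hgap : 4 * specNorm E ≤ δp)
    (x₀ x₁ T : ℝ) (hx₀ : x₀ = lam p - δp / 2)
    (hx₁ : x₁ = 2 * specNorm A) (hT : T = 2 * specNorm A)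
    (M1 M2 M3 M4 F1 : ℝ)
    (hM1 : M1 = ∫ t in (-T)..T, specNorm
      (res A (x₀ + t * Complex.I) * E.map Complex.ofReal
        * res A (x₀ + t * Complex.I)))
    (hM2 : M2 = ∫ x in x₀..x₁, specNorm
      (res A (x + T * Complex.I) * E.map Complex.ofReal
        * res A (x + T * Complex.I)))
    (hM3 : M3 = ∫ t in (-T)..T, specNorm
      (res A (x₁ + t * Complex.I) * E.map Complex.ofReal
        * res A (x₁ + t * Complex.I)))
    (hM4 : M4 = ∫ x in x₀..x₁, specNorm
      (res A (x - T * Complex.I) * E.map Complex.ofReal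
        * res A (x - T * Complex.I)))
    (hF1 : F1 = 1 / (2 * Real.pi) * (M1 + M2 + M3 + M4)) :
    specNorm ((∑ i ∈ Finset.Icc 1 p, vecMulVec (tu i) (tu i))
        - ∑ i ∈ Finset.Icc 1 p, vecMulVec (u i) (u i))
      ≤ 2 * F1 := by
  have hp : p ∈ Finset.Icc 1 n := by simp; omega
  have hp' : p + 1 ∈ Finset.Icc 1 n := by simp; omega
  obtain ⟨b, hb, hb_eig⟩ := exists_orthonormalBasis_eigenvectors hu_on hu_eig
  obtain ⟨b', hb', hb'_eig⟩ := exists_orthonormalBasis_eigenvectors htu_on htu_eig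
  have hlam_le (i : Finset.Icc 1 n) : |lam i| ≤ specNorm A := by
    simpa [specNorm_eq_norm_complexCLM] using
      norm_le_opNorm_of_apply_eq_smul (b.norm_eq_one i) (hb_eig i)
  have hδ_le : δp / 2 ≤ specNorm A := by
    linarith [abs_le.mp (hlam_le ⟨p, hp⟩), abs_le.mp (hlam_le ⟨p + 1, hp'⟩)]
  have hbound := key_lemma_bootstrapping_general b b'
    (fun i j hij => hlam_mono i i.2 j j.2 hij) (fun i j hij => htlam_mono i i.2 j j.2 hij)
    hb_eig (map_add complexCLM A E ▸ hb'_eig) (covBy_subtype_Icc hp hp') hδp hδp_pos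
    (specNorm_eq_norm_complexCLM E ▸ hgap) hx₀
    (x₁ := x₁) (T := T) (fun i => by linarith [le_of_abs_le (hlam_le i)]) (by linarith)
  simp only [hb, hb'] at hbound
  rw [sum_filter_rankOne_complexVec hp, sum_filter_rankOne_complexVec hp, ← map_sub,
    ← specNorm_eq_norm_complexCLM] at hbound
  refine hbound.trans_eq ?_
  simp only [norm_resolvent_mul_complexCLM_mul_resolvent, rectArcIntegral, Complex.ofReal_neg,
    neg_mul, ← sub_eq_add_neg]
  rw [hF1, hM1, hM2, hM3, hM4]
end

section
/- Let T > 0, L > 0, and 0 < δ ≤ L/4. Then ∫_{0}^{T} dt / √( (t² + (δ/2)²)(t² + (L/4)²) ) ≤ (16/L)·log( (2T + δ)/δ ). -/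
theorem mul_add_le_sqrt_two_mul_sqrt (t a b : ℝ) :
    b * (t + a) ≤ √2 * √((t ^ 2 + a ^ 2) * (t ^ 2 + b ^ 2)) := by
  rw [← Real.sqrt_mul zero_le_two]
  apply Real.le_sqrt_of_sq_le
  calc (b * (t + a)) ^ 2 = (t + a) ^ 2 * b ^ 2 := by ring
    _ ≤ 2 * (t ^ 2 + a ^ 2) * (t ^ 2 + b ^ 2) := by
      gcongr
      · exact add_sq_le
      · exact le_add_of_nonneg_left (sq_nonneg t)
    _ = 2 * ((t ^ 2 + a ^ 2) * (t ^ 2 + b ^ 2)) := mul_assoc _ _ _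

theorem one_div_sqrt_mul_le {t a b : ℝ} (hta : 0 < t + a) (hb : 0 < b) :
    1 / √((t ^ 2 + a ^ 2) * (t ^ 2 + b ^ 2)) ≤ √2 / b * (1 / (t + a)) := by
  have hbound := mul_add_le_sqrt_two_mul_sqrt t a b
  have hsqrt : 0 < √((t ^ 2 + a ^ 2) * (t ^ 2 + b ^ 2)) :=
    pos_of_mul_pos_right ((mul_pos hb hta).trans_le hbound) (Real.sqrt_nonneg 2)
  rwa [div_mul_div_comm, mul_one, div_le_div_iff₀ hsqrt (mul_pos hb hta), one_mul]

theorem integral_one_div_add_of_pos {u v a : ℝ} (hu : 0 < u + a) (hv : 0 < v + a) :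
    ∫ t in u..v, 1 / (t + a) = Real.log ((v + a) / (u + a)) := by
  rw [intervalIntegral.integral_comp_add_right (fun x : ℝ => 1 / x),
    integral_one_div_of_pos hu hv]

theorem integral_log_bound_general {T a b : ℝ} (hT : 0 ≤ T) (ha : 0 < a) (hb : 0 < b) :
    ∫ t in (0 : ℝ)..T, 1 / √((t ^ 2 + a ^ 2) * (t ^ 2 + b ^ 2))
      ≤ √2 / b * Real.log ((T + a) / a) := by
  have hadd_pos : ∀ t ∈ Set.Icc 0 T, 0 < t + a := fun t ht => add_pos_of_nonneg_of_pos ht.1 ha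
  have hint_left : IntervalIntegrable
      (fun t => 1 / √((t ^ 2 + a ^ 2) * (t ^ 2 + b ^ 2))) MeasureTheory.volume 0 T :=
    intervalIntegral.intervalIntegrable_one_div (fun t _ => by positivity) (by fun_prop)
  have hint_right : IntervalIntegrable (fun t => 1 / (t + a)) MeasureTheory.volume 0 T :=
    intervalIntegral.intervalIntegrable_one_div
      (fun t ht => (hadd_pos t (Set.uIcc_of_le hT ▸ ht)).ne') (by fun_prop)
  calc ∫ t in (0 : ℝ)..T, 1 / √((t ^ 2 + a ^ 2) * (t ^ 2 + b ^ 2))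
      ≤ ∫ t in (0 : ℝ)..T, √2 / b * (1 / (t + a)) :=
        intervalIntegral.integral_mono_on hT hint_left (hint_right.const_mul _)
          fun t ht => one_div_sqrt_mul_le (hadd_pos t ht) hb
    _ = √2 / b * Real.log ((T + a) / a) := by
        rw [intervalIntegral.integral_const_mul,
          integral_one_div_add_of_pos (by rwa [zero_add]) (by positivity), zero_add]

/-- **Technical logarithmic integral bound** (inequality (5.8) of the paper):
for `T > 0`, `L > 0` and `0 < δ ≤ L/4`,
`∫₀ᵀ dt / √((t² + (δ/2)²)(t² + (L/4)²)) ≤ (16/L)·log((2T + δ)/δ)`. -/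
theorem integral_log_bound
    (T L δ : ℝ) (hT : 0 < T) (hL : 0 < L) (hδ : 0 < δ) (hδL : δ ≤ L / 4) :
    (∫ t in (0:ℝ)..T,
      1 / Real.sqrt ((t ^ 2 + (δ / 2) ^ 2) * (t ^ 2 + (L / 4) ^ 2)))
      ≤ 16 / L * Real.log ((2 * T + δ) / δ) := by
  have hconst : √2 / (L / 4) ≤ 16 / L := by
    have hsqrt : √2 ≤ (4 : ℝ) := Real.sqrt_le_iff.2 (by norm_num)
    rw [div_div_eq_mul_div]
    gcongr
    linarith
  have harg : (T + δ / 2) / (δ / 2) = (2 * T + δ) / δ := by field_simp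
  have hlog : 0 ≤ Real.log ((2 * T + δ) / δ) :=
    Real.log_nonneg ((one_le_div hδ).2 (by linarith))
  calc _ ≤ √2 / (L / 4) * Real.log ((T + δ / 2) / (δ / 2)) :=
        integral_log_bound_general hT.le (half_pos hδ) (by positivity)
    _ ≤ 16 / L * Real.log ((2 * T + δ) / δ) := by rw [harg]; gcongr
end

section
/- Let 1 ≤ p < n, let r be an integer with p ≤ r < n such that |λ_p|/2 ≤ λ_p − λ_{r+1}, set x := max_{1≤i,j≤r} |u_iᵀ E u_j|, and assume 0 < 4‖E‖ ≤ δ_p := λ_p − λ_{p+1} ≤ |λ_p|/4. Then F₁ ≤ 12 ( (‖E‖/|λ_p|)·log(6σ₁/δ_p) + r²x/δ_p ). -/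
open Matrix

/-!
`F₁` is invariant under unitary conjugation, so `A` may be taken diagonal and `E` written in the
eigenbasis of `A`. On the left edge, at height `t`, split the resolvent into the coordinates
`i ≤ r` and the others. On the top block the resolvent is at most `2 / (|t| + δ_p / 2)` and `E` has
entries at most `x`, so bounding the norm by the sum of the entries gives
`4 r² x / (|t| + δ_p / 2)²`. All other coordinates lie at distance at least `3 |λ_p| / 8` from the
edge and contribute a multiple of `‖E‖ / (|λ_p| (|t| + δ_p / 2))`. Integrating in `t` produces the
terms `r² x / δ_p` and `(‖E‖ / |λ_p|) log (6 σ₁ / δ_p)`. The three remaining edges have length of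
order `σ₁` and stay at distance at least `σ₁` from the spectrum, so they only contribute a multiple
of `‖E‖ / σ₁ ≤ ‖E‖ / |λ_p|`, which the logarithm absorbs.
-/

open scoped Matrix.Norms.L2Operator

section Integrals

theorem intervalIntegral_comp_abs {f : ℝ → ℝ} {T : ℝ} (hT : 0 ≤ T)
    (hf : IntervalIntegrable f MeasureTheory.volume 0 T) :
    ∫ t in (-T)..T, f |t| = 2 * ∫ t in (0)..T, f t := by
  have h_pos : ∫ t in (0)..T, f |t| = ∫ t in (0)..T, f t :=
    intervalIntegral.integral_congr fun t ht => by
      simp only [abs_of_nonneg (Set.uIcc_of_le hT ▸ ht).1]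
  have h_neg : ∫ t in (-T)..0, f |t| = ∫ t in (0)..T, f t := by
    simpa [h_pos] using (intervalIntegral.integral_comp_neg (a := 0) (b := T) fun t => f |t|).symm
  have h_int : IntervalIntegrable (fun t => f |t|) MeasureTheory.volume 0 T :=
    hf.congr fun t ht => by rw [abs_of_nonneg (Set.uIoc_of_le hT ▸ ht).1.le]
  have h_int_neg : IntervalIntegrable (fun t => f |t|) MeasureTheory.volume (-T) 0 := by
    simpa using ((IntervalIntegrable.iff_comp_neg (by simp)).1 h_int).symm
  rw [← intervalIntegral.integral_add_adjacent_intervals h_int_neg h_int, h_neg, h_pos, two_mul]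

variable {h T : ℝ}

theorem intervalIntegrable_inv_add_pow (hh : 0 < h) (hT : 0 ≤ T) (k : ℕ) :
    IntervalIntegrable (fun t => ((t + h) ^ k)⁻¹) MeasureTheory.volume 0 T := by
  refine ContinuousOn.intervalIntegrable (ContinuousOn.inv₀ (by fun_prop) fun t ht => ?_)
  have : 0 ≤ t := (Set.uIcc_of_le hT ▸ ht).1
  positivity

theorem integral_inv_abs_add (hh : 0 < h) (hT : 0 ≤ T) :
    ∫ t in (-T)..T, (|t| + h)⁻¹ = 2 * Real.log ((T + h) / h) := by
  rw [intervalIntegral_comp_abs (f := fun t => (t + h)⁻¹) hT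
      (by simpa using intervalIntegrable_inv_add_pow hh hT 1),
    intervalIntegral.integral_comp_add_right (fun t => t⁻¹), zero_add,
    integral_inv_of_pos hh (by positivity)]

theorem integral_inv_abs_add_sq (hh : 0 < h) (hT : 0 ≤ T) :
    ∫ t in (-T)..T, ((|t| + h) ^ 2)⁻¹ = 2 * (h⁻¹ - (T + h)⁻¹) := by
  have h_zero : (0 : ℝ) ∉ Set.uIcc h (T + h) := Set.notMem_uIcc_of_lt hh (by positivity)
  rw [intervalIntegral_comp_abs (f := fun t => ((t + h) ^ 2)⁻¹) hT
      (intervalIntegrable_inv_add_pow hh hT 2),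
    intervalIntegral.integral_comp_add_right (fun t => (t ^ 2)⁻¹), zero_add]
  congr 1
  calc ∫ t in h..T + h, (t ^ 2)⁻¹ = ∫ t in h..T + h, t ^ (-2 : ℤ) := by
        simp only [_root_.zpow_neg, zpow_ofNat]
    _ = ((T + h) ^ (-2 + 1 : ℤ) - h ^ (-2 + 1 : ℤ)) / ((-2 : ℤ) + 1) :=
        integral_zpow (Or.inr ⟨by decide, h_zero⟩)
    _ = ((T + h)⁻¹ - h⁻¹) / (-1) := by norm_num
    _ = h⁻¹ - (T + h)⁻¹ := by ring

theorem integral_le_of_le_inv_abs_add {f : ℝ → ℝ} {c₁ c₂ : ℝ} (hh : 0 < h) (hT : 0 ≤ T)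
    (hc₁ : 0 ≤ c₁) (hf : ∀ t, ‖f t‖ ≤ c₁ * ((|t| + h) ^ 2)⁻¹ + c₂ * (|t| + h)⁻¹) :
    ∫ t in (-T)..T, f t ≤ 2 * c₁ / h + 2 * c₂ * Real.log ((T + h) / h) := by
  have h_ne (t : ℝ) : |t| + h ≠ 0 := by positivity
  have h_int₁ : IntervalIntegrable (fun t => c₁ * ((|t| + h) ^ 2)⁻¹)
      MeasureTheory.volume (-T) T :=
    (continuous_const.mul
      (Continuous.inv₀ (by fun_prop) fun t => pow_ne_zero 2 (h_ne t))).intervalIntegrable _ _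
  have h_int₂ : IntervalIntegrable (fun t => c₂ * (|t| + h)⁻¹) MeasureTheory.volume (-T) T :=
    (continuous_const.mul (Continuous.inv₀ (by fun_prop) h_ne)).intervalIntegrable _ _
  calc ∫ t in (-T)..T, f t
      ≤ ∫ t in (-T)..T, (c₁ * ((|t| + h) ^ 2)⁻¹ + c₂ * (|t| + h)⁻¹) :=
        (Real.le_norm_self _).trans <| intervalIntegral.norm_integral_le_of_norm_le (by linarith)
          (.of_forall fun t _ => hf t) (h_int₁.add h_int₂)
    _ = c₁ * (2 * (h⁻¹ - (T + h)⁻¹)) + c₂ * (2 * Real.log ((T + h) / h)) := by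
        rw [intervalIntegral.integral_add h_int₁ h_int₂, intervalIntegral.integral_const_mul,
          intervalIntegral.integral_const_mul, integral_inv_abs_add_sq hh hT,
          integral_inv_abs_add hh hT]
    _ ≤ c₁ * (2 * h⁻¹) + c₂ * (2 * Real.log ((T + h) / h)) := by
        gcongr
        exact sub_le_self _ (by positivity)
    _ = _ := by ring

end Integrals

section MatrixNorms

variable {m n 𝕜 : Type*} [RCLike 𝕜] [Fintype m] [Fintype n] [DecidableEq n]

theorem l2_opNorm_single [DecidableEq m] (i : m) (j : n) (a : 𝕜) : ‖single i j a‖ = ‖a‖ := by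
  have h_gram : (single i j a)ᴴ * single i j a = diagonal (Pi.single j (star a * a)) := by
    rw [conjTranspose_single, single_mul_single_same, diagonal_single]
  have h_norm := l2_opNorm_conjTranspose_mul_self (single i j a)
  rw [h_gram, l2_opNorm_diagonal, Pi.norm_single, CStarRing.norm_star_mul_self] at h_norm
  exact ((mul_self_inj (norm_nonneg _) (norm_nonneg _)).1 h_norm).symm

theorem l2_opNorm_le_card_mul_card_mul {M : Matrix m n 𝕜} {S : Finset m} {T : Finset n} {x : ℝ}
    (hM : ∀ i j, i ∉ S ∨ j ∉ T → M i j = 0) (hx : ∀ i ∈ S, ∀ j ∈ T, ‖M i j‖ ≤ x) :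
    ‖M‖ ≤ S.card * T.card * x := by
  classical
  have h_sum : M = ∑ q ∈ S ×ˢ T, single q.1 q.2 (M q.1 q.2) := by
    rw [Finset.sum_subset (Finset.subset_univ _), Fintype.sum_prod_type]
    · exact matrix_eq_sum_single M
    · intro q _ hq
      rw [hM q.1 q.2 (not_and_or.1 (by simpa using hq)), single_zero]
  rw [h_sum]
  calc ‖∑ q ∈ S ×ˢ T, single q.1 q.2 (M q.1 q.2)‖ ≤ (S ×ˢ T).card • x :=
        (norm_sum_le _ _).trans <| Finset.sum_le_card_nsmul _ _ _ fun q hq => by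
          rw [l2_opNorm_single]
          exact hx _ (Finset.mem_product.1 hq).1 _ (Finset.mem_product.1 hq).2
    _ = S.card * T.card * x := by simp [Finset.card_product]

theorem l2_opNorm_diagonal_le {d : n → 𝕜} {α : ℝ} (hα : 0 ≤ α) (hd : ∀ i, ‖d i‖ ≤ α) :
    ‖diagonal d‖ ≤ α := by
  rw [l2_opNorm_diagonal]
  exact (pi_norm_le_iff_of_nonneg hα).2 hd

theorem l2_opNorm_diagonal_mul_mul_diagonal_le {G : Matrix n n 𝕜} {d : n → 𝕜} {S : Finset n}
    {x α β : ℝ} (hx : ∀ i ∈ S, ∀ j ∈ S, ‖G i j‖ ≤ x) (hα : 0 ≤ α) (hβ : 0 ≤ β)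
    (hd : ∀ i, ‖d i‖ ≤ α) (hdS : ∀ i ∉ S, ‖d i‖ ≤ β) :
    ‖diagonal d * G * diagonal d‖ ≤ (S.card : ℝ) ^ 2 * x * α ^ 2 + 2 * ‖G‖ * α * β := by
  classical
  let dS : n → 𝕜 := Set.indicator S d
  let dS' : n → 𝕜 := Set.indicator (↑S)ᶜ d
  have h_split : diagonal d = diagonal dS + diagonal dS' := by
    rw [diagonal_add]
    exact congrArg diagonal (Set.indicator_self_add_compl (↑S) d).symm
  have h_dS : ‖diagonal dS‖ ≤ α := l2_opNorm_diagonal_le hα fun i =>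
    (norm_indicator_le_norm_self d i).trans (hd i)
  have h_dS' : ‖diagonal dS'‖ ≤ β := l2_opNorm_diagonal_le hβ fun i => by
    by_cases hi : i ∈ S
    · simpa [dS', hi] using hβ
    · simpa [dS', hi] using hdS i hi
  have h_block : ‖diagonal dS * G * diagonal dS‖ ≤ S.card * S.card * (α * x * α) := by
    refine l2_opNorm_le_card_mul_card_mul (fun i j hij => ?_) fun i hi j hj => ?_
    · rcases hij with hi | hj
      · simp [dS, hi]
      · simp [dS, hj]
    · have hGx := hx i hi j hj
      have hx₀ : 0 ≤ x := (norm_nonneg _).trans hGx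
      simp only [mul_diagonal, diagonal_mul, norm_mul, dS, Set.indicator_of_mem, hi, hj,
        Finset.mem_coe]
      gcongr
      exacts [hd i, hd j]
  calc ‖diagonal d * G * diagonal d‖
      = ‖diagonal dS * G * diagonal dS + diagonal dS * G * diagonal dS'
          + diagonal dS' * G * diagonal d‖ := by rw [h_split]; congr 1; noncomm_ring
    _ ≤ S.card * S.card * (α * x * α) + α * ‖G‖ * β + β * ‖G‖ * α := by
        refine norm_add₃_le.trans (add_le_add_three h_block ?_ ?_)
        · exact norm_mul₃_le.trans (by gcongr)
        · exact norm_mul₃_le.trans (by gcongr; exact l2_opNorm_diagonal_le hα hd)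
    _ = _ := by ring

end MatrixNorms

section Complexification

variable {m n : Type*} [Fintype n]

theorem map_ofReal_mulVec_ofReal (M : Matrix m n ℝ) (v : n → ℝ) :
    M.map Complex.ofReal *ᵥ (fun i => (v i : ℂ)) = fun i => ((M *ᵥ v) i : ℂ) := by
  exact funext fun i => (RingHom.map_mulVec Complex.ofRealHom M v i).symm

theorem star_ofReal_dotProduct_ofReal (v w : n → ℝ) :
    star (fun i => (v i : ℂ)) ⬝ᵥ (fun i => (w i : ℂ)) = ((v ⬝ᵥ w : ℝ) : ℂ) := by
  simp [dotProduct]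

theorem norm_toLp_ofReal (v : n → ℝ) :
    ‖WithLp.toLp 2 (fun i => (v i : ℂ))‖ = ‖WithLp.toLp 2 v‖ := by
  simp [EuclideanSpace.norm_eq]

theorem norm_sq_toLp_eq_re_add_im (v : n → ℂ) :
    ‖WithLp.toLp 2 v‖ ^ 2
      = ‖WithLp.toLp 2 fun i => (v i).re‖ ^ 2 + ‖WithLp.toLp 2 fun i => (v i).im‖ ^ 2 := by
  simp only [EuclideanSpace.norm_sq_eq, ← Finset.sum_add_distrib, Real.norm_eq_abs, sq_abs,
    Complex.sq_norm, Complex.normSq_apply, ← sq]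

theorem l2_opNorm_map_ofReal [Fintype m] [DecidableEq n] (M : Matrix m n ℝ) :
    ‖M.map Complex.ofReal‖ = ‖M‖ := by
  refine le_antisymm ?_ ?_
  · refine ContinuousLinearMap.opNorm_le_bound _ (norm_nonneg _) fun v => ?_
    have h_re (i : m) : ((M.map Complex.ofReal *ᵥ v.ofLp) i).re = (M *ᵥ fun j => (v j).re) i := by
      simp [mulVec, dotProduct]
    have h_im (i : m) : ((M.map Complex.ofReal *ᵥ v.ofLp) i).im = (M *ᵥ fun j => (v j).im) i := by
      simp [mulVec, dotProduct]
    refine (sq_le_sq₀ (norm_nonneg _) (by positivity)).1 ?_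
    calc ‖WithLp.toLp 2 (M.map Complex.ofReal *ᵥ v.ofLp)‖ ^ 2
        = ‖WithLp.toLp 2 (M *ᵥ fun j => (v j).re)‖ ^ 2
          + ‖WithLp.toLp 2 (M *ᵥ fun j => (v j).im)‖ ^ 2 := by
          simp only [norm_sq_toLp_eq_re_add_im, h_re, h_im]
      _ ≤ (‖M‖ * ‖WithLp.toLp 2 fun j => (v j).re‖) ^ 2
          + (‖M‖ * ‖WithLp.toLp 2 fun j => (v j).im‖) ^ 2 := by
          gcongr <;> exact l2_opNorm_mulVec M (WithLp.toLp 2 _)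
      _ = (‖M‖ * ‖v‖) ^ 2 := by
          rw [mul_pow, mul_pow, mul_pow, ← mul_add, ← norm_sq_toLp_eq_re_add_im]
  · refine ContinuousLinearMap.opNorm_le_bound _ (norm_nonneg _) fun v => ?_
    change ‖WithLp.toLp 2 (M *ᵥ v.ofLp)‖ ≤ ‖M.map Complex.ofReal‖ * ‖WithLp.toLp 2 v.ofLp‖
    rw [← norm_toLp_ofReal, ← norm_toLp_ofReal v.ofLp, ← map_ofReal_mulVec_ofReal]
    exact l2_opNorm_mulVec (M.map Complex.ofReal) (WithLp.toLp 2 fun j => (v j : ℂ))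

end Complexification

section ResolventSandwich

theorem map_ringInverse_s17 {M N F : Type*} [MonoidWithZero M] [MonoidWithZero N] [EquivLike F M N]
    [MulEquivClass F M N] (φ : F) (a : M) : Ring.inverse (φ a) = φ (Ring.inverse a) := by
  by_cases ha : IsUnit a
  · obtain ⟨v, rfl⟩ := ha
    rw [Ring.inverse_unit]
    exact Ring.inverse_unit (Units.map (φ : M →* N) v)
  · rw [Ring.inverse_non_unit a ha, Ring.inverse_non_unit _ (by simpa using ha), map_zero]

variable {A B F : Type*}

/-- The first-order term `(z - a)⁻¹ e (z - a)⁻¹` in the expansion of the resolvent of `a + e` in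
powers of `e`. -/
noncomputable def resolventSandwich [Ring A] [Algebra ℂ A] (a e : A) (z : ℂ) : A :=
  resolvent a z * e * resolvent a z

theorem resolventSandwich_map [Ring A] [Algebra ℂ A] [Ring B] [Algebra ℂ B] [EquivLike F A B]
    [AlgEquivClass F ℂ A B] (φ : F) (a e : A) (z : ℂ) :
    resolventSandwich (φ a) (φ e) z = φ (resolventSandwich a e z) := by
  have h_res : resolvent (φ a) z = φ (resolvent a z) := by
    rw [resolvent, resolvent, ← map_ringInverse_s17, map_sub, AlgHomClass.commutes]
  simp only [resolventSandwich, h_res, map_mul]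

/-- The normalized contour integral of the norm of the first-order resolvent term of `a` and `e`
along the boundary of the rectangle `[x₀, x₁] × [-T, T]` of the complex plane; the four summands
are the paper's `M₁`, `M₂`, `M₃`, `M₄`. -/
noncomputable def rectangleResolventIntegral [Ring A] [Algebra ℂ A] [Norm A] (a e : A)
    (x₀ x₁ T : ℝ) : ℝ :=
  1 / (2 * Real.pi) *
    ((∫ t in (-T)..T, ‖resolventSandwich a e (x₀ + t * Complex.I)‖)
      + (∫ s in x₀..x₁, ‖resolventSandwich a e (s + T * Complex.I)‖)
      + (∫ t in (-T)..T, ‖resolventSandwich a e (x₁ + t * Complex.I)‖)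
      + ∫ s in x₀..x₁, ‖resolventSandwich a e (s - T * Complex.I)‖)

theorem rectangleResolventIntegral_map [CStarAlgebra A] [CStarAlgebra B] (φ : A ≃⋆ₐ[ℂ] B)
    (a e : A) (x₀ x₁ T : ℝ) :
    rectangleResolventIntegral (φ a) (φ e) x₀ x₁ T = rectangleResolventIntegral a e x₀ x₁ T := by
  simp only [rectangleResolventIntegral, resolventSandwich_map, StarAlgEquiv.norm_map]

end ResolventSandwich

section Diagonal

variable {ι : Type*} [Fintype ι] [DecidableEq ι]

theorem resolvent_diagonal {l : ι → ℂ} {z : ℂ} (hz : ∀ i, z ≠ l i) :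
    resolvent (diagonal l) z = diagonal fun i => (z - l i)⁻¹ := by
  have h_sub : algebraMap ℂ (Matrix ι ι ℂ) z - diagonal l = diagonal fun i => z - l i := by
    rw [algebraMap_eq_diagonal, diagonal_sub]
    rfl
  rw [resolvent, h_sub, ← nonsing_inv_eq_ringInverse]
  refine inv_eq_right_inv ?_
  simp only [diagonal_mul_diagonal, mul_inv_cancel₀ (sub_ne_zero.2 (hz _)), diagonal_one]

theorem norm_resolventSandwich_diagonal_le {l : ι → ℂ} {z : ℂ} {m : ℝ} (hm : 0 < m)
    (hz : ∀ i, m ≤ ‖z - l i‖) (G : Matrix ι ι ℂ) :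
    ‖resolventSandwich (diagonal l) G z‖ ≤ ‖G‖ / m ^ 2 := by
  have hz_ne (i : ι) : z ≠ l i := sub_ne_zero.1 (norm_pos_iff.1 (hm.trans_le (hz i)))
  have h_res : ‖diagonal fun i => (z - l i)⁻¹‖ ≤ m⁻¹ :=
    l2_opNorm_diagonal_le (by positivity) fun i => by
      rw [norm_inv]
      exact inv_anti₀ hm (hz i)
  rw [resolventSandwich, resolvent_diagonal hz_ne]
  calc _ ≤ m⁻¹ * ‖G‖ * m⁻¹ := norm_mul₃_le.trans (by gcongr)
    _ = ‖G‖ / m ^ 2 := by ring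

theorem norm_resolventSandwich_diagonal_le_of_block {l : ι → ℂ} {z : ℂ} {S : Finset ι}
    {G : Matrix ι ι ℂ} {m c x : ℝ} (hm : 0 < m) (hc : 0 < c) (hz : ∀ i, m ≤ ‖z - l i‖)
    (hzS : ∀ i ∉ S, c ≤ ‖z - l i‖) (hx : ∀ i ∈ S, ∀ j ∈ S, ‖G i j‖ ≤ x) :
    ‖resolventSandwich (diagonal l) G z‖
      ≤ (S.card : ℝ) ^ 2 * x * m⁻¹ ^ 2 + 2 * ‖G‖ * m⁻¹ * c⁻¹ := by
  have hz_ne (i : ι) : z ≠ l i := sub_ne_zero.1 (norm_pos_iff.1 (hm.trans_le (hz i)))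
  rw [resolventSandwich, resolvent_diagonal hz_ne]
  refine l2_opNorm_diagonal_mul_mul_diagonal_le hx (by positivity) (by positivity)
    (fun i => ?_) fun i hi => ?_
  · rw [norm_inv]
    exact inv_anti₀ hm (hz i)
  · rw [norm_inv]
    exact inv_anti₀ hc (hzS i hi)

variable {l : ι → ℝ}

theorem integral_norm_resolventSandwich_horizontal_le {a b T : ℝ} (hab : a ≤ b) (hT : T ≠ 0)
    (G : Matrix ι ι ℂ) :
    ∫ s in a..b, ‖resolventSandwich (diagonal fun i => (l i : ℂ)) G (s + T * Complex.I)‖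
      ≤ ‖G‖ / T ^ 2 * (b - a) := by
  have h_norm (s : ℝ) :
      ‖‖resolventSandwich (diagonal fun i => (l i : ℂ)) G (s + T * Complex.I)‖‖ ≤ ‖G‖ / T ^ 2 := by
    rw [norm_norm, ← sq_abs T]
    refine norm_resolventSandwich_diagonal_le (abs_pos.2 hT) (fun i => ?_) G
    simpa using Complex.abs_im_le_norm (s + T * Complex.I - l i)
  have h := intervalIntegral.norm_integral_le_of_norm_le_const (a := a) (b := b)
    fun s _ => h_norm s
  rw [abs_of_nonneg (sub_nonneg.2 hab)] at h
  exact (Real.le_norm_self _).trans h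

theorem integral_norm_resolventSandwich_vertical_le {b m T : ℝ} (hm : 0 < m) (hT : 0 ≤ T)
    (hb : ∀ i, m ≤ |b - l i|) (G : Matrix ι ι ℂ) :
    ∫ t in (-T)..T, ‖resolventSandwich (diagonal fun i => (l i : ℂ)) G (b + t * Complex.I)‖
      ≤ ‖G‖ / m ^ 2 * (2 * T) := by
  have h_norm (t : ℝ) :
      ‖‖resolventSandwich (diagonal fun i => (l i : ℂ)) G (b + t * Complex.I)‖‖ ≤ ‖G‖ / m ^ 2 := by
    rw [norm_norm]
    refine norm_resolventSandwich_diagonal_le hm (fun i => (hb i).trans ?_) G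
    simpa using Complex.abs_re_le_norm (b + t * Complex.I - l i)
  have h := intervalIntegral.norm_integral_le_of_norm_le_const (a := -T) (b := T)
    fun t _ => h_norm t
  rw [abs_of_nonneg (by linarith), sub_neg_eq_add, ← two_mul] at h
  exact (Real.le_norm_self _).trans h

theorem integral_norm_resolventSandwich_vertical_le_log {S : Finset ι} {G : Matrix ι ι ℂ}
    {a h c x T : ℝ} (hh : 0 < h) (hc : 0 < c) (hT : 0 ≤ T)
    (ha : ∀ i, h ≤ |a - l i|) (haS : ∀ i ∉ S, c ≤ |a - l i|)
    (hx : ∀ i ∈ S, ∀ j ∈ S, ‖G i j‖ ≤ x) :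
    ∫ t in (-T)..T, ‖resolventSandwich (diagonal fun i => (l i : ℂ)) G (a + t * Complex.I)‖
      ≤ 8 * ((S.card : ℝ) ^ 2 * x) / h + 8 * ‖G‖ / c * Real.log ((T + h) / h) := by
  have h_block : 0 ≤ (S.card : ℝ) ^ 2 * x := by
    rcases S.eq_empty_or_nonempty with rfl | ⟨i, hi⟩
    · simp
    · exact mul_nonneg (sq_nonneg _) ((norm_nonneg _).trans (hx i hi i hi))
  have h_re (t : ℝ) (i : ι) : |a - l i| ≤ ‖(a + t * Complex.I - l i : ℂ)‖ := by
    simpa using Complex.abs_re_le_norm (a + t * Complex.I - l i)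
  have h_im (t : ℝ) (i : ι) : |t| ≤ ‖(a + t * Complex.I - l i : ℂ)‖ := by
    simpa using Complex.abs_im_le_norm (a + t * Complex.I - l i)
  calc _ ≤ 2 * (4 * ((S.card : ℝ) ^ 2 * x)) / h + 2 * (4 * ‖G‖ / c) * Real.log ((T + h) / h) := by
        refine integral_le_of_le_inv_abs_add hh hT (by positivity) fun t => ?_
        rw [norm_norm]
        refine (norm_resolventSandwich_diagonal_le_of_block (m := (|t| + h) / 2) (by positivity) hc
          (fun i => ?_) (fun i hi => (haS i hi).trans (h_re t i)) hx).trans_eq ?_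
        · -- The distance from `a + t i` to `l i` is at least `max |t| h`.
          linarith [h_im t i, h_re t i, ha i]
        · field_simp
          ring
    _ = _ := by ring

variable {G : Matrix ι ι ℂ} {S : Finset ι} {k : ι} {δ σ x : ℝ}

theorem integral_norm_resolventSandwich_left_edge_le (hδ : 0 < δ) (hδ_le : δ ≤ |l k| / 4)
    (hσ : |l k| ≤ σ) (h_gap : ∀ i, l i ≤ l k - δ ∨ l k ≤ l i)
    (h_tail : ∀ i ∉ S, |l k| / 2 ≤ l k - l i) (hx : ∀ i ∈ S, ∀ j ∈ S, ‖G i j‖ ≤ x) :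
    ∫ t in (-(2 * σ))..(2 * σ),
        ‖resolventSandwich (diagonal fun i => (l i : ℂ)) G ((l k - δ / 2 : ℝ) + t * Complex.I)‖
      ≤ 16 * ((S.card : ℝ) ^ 2 * x / δ)
        + 64 / 3 * (‖G‖ / |l k| * Real.log (6 * σ / δ)) := by
  have hk : 0 < |l k| := by linarith
  have hσ_pos : 0 < σ := hk.trans_le hσ
  have h_near (i : ι) : δ / 2 ≤ |l k - δ / 2 - l i| := by
    rcases h_gap i with h | h
    · exact le_abs.2 (Or.inl (by linarith))
    · exact le_abs.2 (Or.inr (by linarith))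
  have h_far (i : ι) (hi : i ∉ S) : 3 / 8 * |l k| ≤ |l k - δ / 2 - l i| :=
    le_abs.2 (Or.inl (by linarith [h_tail i hi]))
  have h_log : Real.log ((2 * σ + δ / 2) / (δ / 2)) ≤ Real.log (6 * σ / δ) := by
    refine Real.log_le_log (by positivity) ?_
    calc (2 * σ + δ / 2) / (δ / 2) = (4 * σ + δ) / δ := by field_simp; ring
      _ ≤ 6 * σ / δ := by gcongr; linarith
  calc _ ≤ 8 * ((S.card : ℝ) ^ 2 * x) / (δ / 2)
          + 8 * ‖G‖ / (3 / 8 * |l k|) * Real.log ((2 * σ + δ / 2) / (δ / 2)) :=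
        integral_norm_resolventSandwich_vertical_le_log (by positivity) (by positivity)
          (by linarith) h_near h_far hx
    _ ≤ 8 * ((S.card : ℝ) ^ 2 * x) / (δ / 2)
          + 8 * ‖G‖ / (3 / 8 * |l k|) * Real.log (6 * σ / δ) := by gcongr
    _ = _ := by field_simp; ring

theorem integral_norm_resolventSandwich_right_edge_le (hk : 0 < |l k|) (hσ : ∀ i, |l i| ≤ σ) :
    ∫ t in (-(2 * σ))..(2 * σ),
        ‖resolventSandwich (diagonal fun i => (l i : ℂ)) G ((2 * σ : ℝ) + t * Complex.I)‖
      ≤ 4 * (‖G‖ / |l k|) := by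
  have hσ_pos : 0 < σ := hk.trans_le (hσ k)
  calc _ ≤ ‖G‖ / σ ^ 2 * (2 * (2 * σ)) :=
        integral_norm_resolventSandwich_vertical_le hσ_pos (by positivity)
          (fun i => le_abs.2 (Or.inl (by linarith [(abs_le.1 (hσ i)).2]))) G
    _ = 4 * (‖G‖ / σ) := by field_simp; ring
    _ ≤ 4 * (‖G‖ / |l k|) := by gcongr; exact hσ k

theorem integral_norm_resolventSandwich_horizontal_edge_le {T : ℝ} (hδ : 0 < δ)
    (hδ_le : δ ≤ |l k| / 4) (hσ : |l k| ≤ σ) (hT : |T| = 2 * σ) :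
    ∫ s in (l k - δ / 2)..(2 * σ),
        ‖resolventSandwich (diagonal fun i => (l i : ℂ)) G (s + T * Complex.I)‖
      ≤ ‖G‖ / |l k| := by
  have hσ_pos : 0 < σ := by linarith [abs_nonneg (l k)]
  have hk : 0 < |l k| := by linarith
  have ⟨h_lower, h_upper⟩ := abs_le.1 hσ
  calc _ ≤ ‖G‖ / T ^ 2 * (2 * σ - (l k - δ / 2)) :=
        integral_norm_resolventSandwich_horizontal_le (by linarith)
          (abs_pos.1 (by linarith)) G
    _ = ‖G‖ / (2 * σ) ^ 2 * (2 * σ - (l k - δ / 2)) := by rw [← sq_abs T, hT]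
    _ ≤ ‖G‖ / (2 * σ) ^ 2 * (4 * σ) := by gcongr; linarith
    _ = ‖G‖ / σ := by field_simp; ring
    _ ≤ ‖G‖ / |l k| := by gcongr

theorem rectangleResolventIntegral_diagonal_le (hδ : 0 < δ) (hδ_le : δ ≤ |l k| / 4)
    (hσ : ∀ i, |l i| ≤ σ) (h_gap : ∀ i, l i ≤ l k - δ ∨ l k ≤ l i)
    (h_tail : ∀ i ∉ S, |l k| / 2 ≤ l k - l i) (hx : ∀ i ∈ S, ∀ j ∈ S, ‖G i j‖ ≤ x) :
    rectangleResolventIntegral (diagonal fun i => (l i : ℂ)) G (l k - δ / 2) (2 * σ) (2 * σ)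
      ≤ 12 * (‖G‖ / |l k| * Real.log (6 * σ / δ) + (S.card : ℝ) ^ 2 * x / δ) := by
  have hk : 0 < |l k| := by linarith
  have hk_mem : k ∈ S := by
    by_contra h
    linarith [h_tail k h]
  have hx₀ : 0 ≤ x := (norm_nonneg _).trans (hx k hk_mem k hk_mem)
  have hσ_pos : 0 < σ := hk.trans_le (hσ k)
  have h_left := integral_norm_resolventSandwich_left_edge_le hδ hδ_le (hσ k) h_gap h_tail hx
  have h_right := integral_norm_resolventSandwich_right_edge_le (G := G) hk hσ
  have h_upper := integral_norm_resolventSandwich_horizontal_edge_le (G := G) (T := 2 * σ) hδ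
    hδ_le (hσ k) (abs_of_pos (by positivity))
  have h_lower := integral_norm_resolventSandwich_horizontal_edge_le (G := G) (T := -(2 * σ))
    hδ hδ_le (hσ k) (by rw [abs_neg, abs_of_pos (by positivity)])
  simp only [Complex.ofReal_neg, neg_mul, ← sub_eq_add_neg] at h_lower
  -- `6 σ / δ ≥ 24 > e`
  have h_log : 1 ≤ Real.log (6 * σ / δ) := by
    rw [Real.le_log_iff_exp_le (by positivity), le_div_iff₀ hδ]
    nlinarith [Real.exp_one_lt_d9, hσ k]
  have h_ratio_nonneg : 0 ≤ ‖G‖ / |l k| := by positivity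
  have h_ratio_le := le_mul_of_one_le_right h_ratio_nonneg h_log
  have h_block_nonneg : 0 ≤ (S.card : ℝ) ^ 2 * x / δ := by positivity
  rw [rectangleResolventIntegral, one_div, inv_mul_le_iff₀ (by positivity)]
  calc _ ≤ 2 * 3 * (12 * (‖G‖ / |l k| * Real.log (6 * σ / δ) + (S.card : ℝ) ^ 2 * x / δ)) := by
        linarith
    _ ≤ _ := by
        gcongr
        exact Real.pi_gt_three.le

end Diagonal

section Eigenbasis

/-- `u` is an orthonormal family of eigenvectors of `A`, indexed like the columns of `A`, with real
eigenvalues `l`. -/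
structure IsOrthonormalEigenbasis {ι : Type*} [Fintype ι] [DecidableEq ι] (A : Matrix ι ι ℂ)
    (l : ι → ℝ) (u : ι → ι → ℂ) : Prop where
  orthonormal : ∀ i j, star (u i) ⬝ᵥ u j = if i = j then 1 else 0
  mulVec_eq : ∀ i, A *ᵥ u i = (l i : ℂ) • u i

variable {ι : Type*} [Fintype ι] [DecidableEq ι] {A E : Matrix ι ι ℂ} {l : ι → ℝ} {u : ι → ι → ℂ}

namespace IsOrthonormalEigenbasis

/-- The unitary matrix whose columns are the eigenvectors `u`. -/
noncomputable def eigenvectorUnitary (hA : IsOrthonormalEigenbasis A l u) : unitaryGroup ι ℂ :=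
  ⟨(of u)ᵀ, mem_unitaryGroup_iff'.2 <| by
    ext i j
    exact (hA.orthonormal i j).trans (one_apply (i := i) (j := j)).symm⟩

theorem conjStarAlgAut_diagonal (hA : IsOrthonormalEigenbasis A l u) :
    Unitary.conjStarAlgAut ℂ (Matrix ι ι ℂ) hA.eigenvectorUnitary (diagonal fun i => (l i : ℂ))
      = A := by
  let V : Matrix ι ι ℂ := hA.eigenvectorUnitary
  have h_eig : V * diagonal (fun i => (l i : ℂ)) = A * V := by
    ext i j
    rw [mul_diagonal, mul_comm]
    exact (congrFun (hA.mulVec_eq j) i).symm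
  calc V * diagonal (fun i => (l i : ℂ)) * star V = A * (V * star V) := by
        rw [h_eig, Matrix.mul_assoc]
    _ = A := by rw [Unitary.mul_star_self_of_mem hA.eigenvectorUnitary.2, Matrix.mul_one]

theorem conjStarAlgAut_symm_apply (hA : IsOrthonormalEigenbasis A l u) (i j : ι) :
    (Unitary.conjStarAlgAut ℂ (Matrix ι ι ℂ) hA.eigenvectorUnitary).symm E i j
      = star (u i) ⬝ᵥ E *ᵥ u j := by
  rw [Unitary.conjStarAlgAut_symm_apply, Matrix.mul_assoc]
  rfl

theorem rectangleResolventIntegral_le (hA : IsOrthonormalEigenbasis A l u) {S : Finset ι} {k : ι}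
    {δ x : ℝ} (hδ : 0 < δ) (hδ_le : δ ≤ |l k| / 4) (h_gap : ∀ i, l i ≤ l k - δ ∨ l k ≤ l i)
    (h_tail : ∀ i ∉ S, |l k| / 2 ≤ l k - l i)
    (hx : ∀ i ∈ S, ∀ j ∈ S, ‖star (u i) ⬝ᵥ E *ᵥ u j‖ ≤ x) :
    rectangleResolventIntegral A E (l k - δ / 2) (2 * ‖A‖) (2 * ‖A‖)
      ≤ 12 * (‖E‖ / |l k| * Real.log (6 * ‖A‖ / δ) + (S.card : ℝ) ^ 2 * x / δ) := by
  let φ := Unitary.conjStarAlgAut ℂ (Matrix ι ι ℂ) hA.eigenvectorUnitary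
  let D : Matrix ι ι ℂ := diagonal fun i => (l i : ℂ)
  have h_abs_le (i : ι) : |l i| ≤ ‖D‖ := by
    rw [l2_opNorm_diagonal]
    simpa using norm_le_pi_norm (fun i => (l i : ℂ)) i
  have h_entry (i) (hi : i ∈ S) (j) (hj : j ∈ S) : ‖φ.symm E i j‖ ≤ x := by
    rw [hA.conjStarAlgAut_symm_apply]
    exact hx i hi j hj
  have h_diag := rectangleResolventIntegral_diagonal_le hδ hδ_le h_abs_le h_gap h_tail h_entry
  rwa [← rectangleResolventIntegral_map φ, ← StarAlgEquiv.norm_map φ D, hA.conjStarAlgAut_diagonal,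
    φ.apply_symm_apply, StarAlgEquiv.norm_map φ.symm] at h_diag

end IsOrthonormalEigenbasis

end Eigenbasis

theorem F1_bound_general {n : ℕ} (A E : Matrix (Fin n) (Fin n) ℂ) (lam : ℕ → ℝ)
    (hlam_mono : ∀ i ∈ Finset.Icc 1 n, ∀ j ∈ Finset.Icc 1 n, i ≤ j → lam j ≤ lam i)
    (u : ℕ → Fin n → ℂ)
    (hu_on : ∀ i ∈ Finset.Icc 1 n, ∀ j ∈ Finset.Icc 1 n,
      star (u i) ⬝ᵥ u j = if i = j then 1 else 0)
    (hu_eig : ∀ i ∈ Finset.Icc 1 n, A *ᵥ u i = (lam i : ℂ) • u i)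
    (p r : ℕ) (hp1 : 1 ≤ p) (hpr : p ≤ r) (hrn : r < n)
    (hr_half : |lam p| / 2 ≤ lam p - lam (r + 1)) (x : ℝ)
    (hx : ∀ i ∈ Finset.Icc 1 r, ∀ j ∈ Finset.Icc 1 r, ‖star (u i) ⬝ᵥ E *ᵥ u j‖ ≤ x)
    (δp : ℝ) (hδp : δp = lam p - lam (p + 1)) (hgap_lo : 0 < δp) (hgap_hi : δp ≤ |lam p| / 4) :
    rectangleResolventIntegral A E (lam p - δp / 2) (2 * ‖A‖) (2 * ‖A‖)
      ≤ 12 * (‖E‖ / |lam p| * Real.log (6 * ‖A‖ / δp) + (r : ℝ) ^ 2 * x / δp) := by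
  subst hδp
  have h_mem (i : Fin n) : (i : ℕ) + 1 ∈ Finset.Icc 1 n := Finset.mem_Icc.2 ⟨by omega, i.2⟩
  have hA : IsOrthonormalEigenbasis A (fun i => lam (i + 1)) fun i => u (i + 1) :=
    ⟨fun i j => by simpa [Fin.ext_iff] using hu_on _ (h_mem i) _ (h_mem j),
      fun i => hu_eig _ (h_mem i)⟩
  obtain ⟨k, rfl⟩ : ∃ k : Fin n, (k : ℕ) + 1 = p := ⟨⟨p - 1, by omega⟩, Nat.sub_add_cancel hp1⟩
  have h_gap (i : Fin n) : lam (i + 1) ≤ lam (k + 1) - (lam (k + 1) - lam (k + 1 + 1))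
      ∨ lam (k + 1) ≤ lam (i + 1) := by
    rcases le_or_gt i k with hik | hki
    · exact Or.inr (hlam_mono _ (h_mem i) _ (h_mem k) (by omega))
    · rw [sub_sub_cancel]
      exact Or.inl (hlam_mono _ (Finset.mem_Icc.2 ⟨by omega, by omega⟩) _ (h_mem i) (by omega))
  have h_tail (i : Fin n) (hi : i ∉ Finset.univ.filter fun i : Fin n => (i : ℕ) < r) :
      |lam (k + 1)| / 2 ≤ lam (k + 1) - lam (i + 1) := by
    have hri : r ≤ i := by simpa using hi
    linarith [hlam_mono (r + 1) (Finset.mem_Icc.2 ⟨by omega, by omega⟩) _ (h_mem i) (by omega)]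
  have h_card : (Finset.univ.filter fun i : Fin n => (i : ℕ) < r).card = r := by
    rw [Fin.card_filter_val_lt, min_eq_right hrn.le]
  simpa only [h_card] using hA.rectangleResolventIntegral_le hgap_lo hgap_hi h_gap h_tail
    fun i hi j hj => hx _ (Finset.mem_Icc.2 ⟨by omega, by simpa using hi⟩) _
      (Finset.mem_Icc.2 ⟨by omega, by simpa using hj⟩)

theorem specNorm_eq_norm {𝕜 : Type*} [RCLike 𝕜] {m n : ℕ} (M : Matrix (Fin m) (Fin n) 𝕜) :
    specNorm M = ‖M‖ :=
  rfl

theorem res_eq_resolvent {n : ℕ} (A : Matrix (Fin n) (Fin n) ℝ) (z : ℂ) :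
    res A z = resolvent (A.map Complex.ofReal) z := by
  rw [res, resolvent, Algebra.algebraMap_eq_smul_one, nonsing_inv_eq_ringInverse]

/-- **Bound on `F₁`** (final estimate in Section 4 of the paper). Indices are
1-based; `σ₁ = ‖A‖`, `x₀ = λ_p − δ_p/2`, `x₁ = T = 2σ₁`. -/
theorem F1_bound
    {n : ℕ} (A E : Matrix (Fin n) (Fin n) ℝ) (hA : A.IsSymm) (hE : E.IsSymm)
    (lam : ℕ → ℝ)
    (hlam_mono : ∀ i ∈ Finset.Icc 1 n, ∀ j ∈ Finset.Icc 1 n, i ≤ j → lam j ≤ lam i)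
    (u : ℕ → (Fin n → ℝ))
    (hu_on : ∀ i ∈ Finset.Icc 1 n, ∀ j ∈ Finset.Icc 1 n,
      u i ⬝ᵥ u j = if i = j then 1 else 0)
    (hu_eig : ∀ i ∈ Finset.Icc 1 n, A *ᵥ u i = lam i • u i)
    (p : ℕ) (hp1 : 1 ≤ p) (hpn : p < n)
    (r : ℕ) (hpr : p ≤ r) (hrn : r < n)
    (hr_half : |lam p| / 2 ≤ lam p - lam (r + 1))
    (x : ℝ)
    (hx : x = (Finset.Icc 1 r ×ˢ Finset.Icc 1 r).sup'
      (Finset.Nonempty.product (Finset.nonempty_Icc.mpr (le_trans hp1 hpr))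
        (Finset.nonempty_Icc.mpr (le_trans hp1 hpr)))
      (fun q => |u q.1 ⬝ᵥ E *ᵥ u q.2|))
    (δp : ℝ) (hδp : δp = lam p - lam (p + 1))
    (hE_pos : 0 < specNorm E)
    (hgap_lo : 4 * specNorm E ≤ δp) (hgap_hi : δp ≤ |lam p| / 4)
    (x₀ x₁ T : ℝ) (hx₀ : x₀ = lam p - δp / 2)
    (hx₁ : x₁ = 2 * specNorm A) (hT : T = 2 * specNorm A)
    (M1 M2 M3 M4 F1 : ℝ)
    (hM1 : M1 = ∫ t in (-T)..T, specNorm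
      (res A (x₀ + t * Complex.I) * E.map Complex.ofReal
        * res A (x₀ + t * Complex.I)))
    (hM2 : M2 = ∫ x' in x₀..x₁, specNorm
      (res A (x' + T * Complex.I) * E.map Complex.ofReal
        * res A (x' + T * Complex.I)))
    (hM3 : M3 = ∫ t in (-T)..T, specNorm
      (res A (x₁ + t * Complex.I) * E.map Complex.ofReal
        * res A (x₁ + t * Complex.I)))
    (hM4 : M4 = ∫ x' in x₀..x₁, specNorm
      (res A (x' - T * Complex.I) * E.map Complex.ofReal
        * res A (x' - T * Complex.I)))
    (hF1 : F1 = 1 / (2 * Real.pi) * (M1 + M2 + M3 + M4)) :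
    F1 ≤ 12 * (specNorm E / |lam p| * Real.log (6 * specNorm A / δp)
      + (r : ℝ) ^ 2 * x / δp) := by
  subst hx₀ hx₁ hT hM1 hM2 hM3 hM4 hF1
  have h_entry : ∀ i ∈ Finset.Icc 1 r, ∀ j ∈ Finset.Icc 1 r, |u i ⬝ᵥ E *ᵥ u j| ≤ x :=
    fun i hi j hj => hx ▸ Finset.le_sup' (fun q : ℕ × ℕ => |u q.1 ⬝ᵥ E *ᵥ u q.2|)
      (Finset.mk_mem_product hi hj)
  have h := F1_bound_general (A.map Complex.ofReal) (E.map Complex.ofReal) lam hlam_mono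
    (fun i j => (u i j : ℂ))
    (fun i hi j hj => by
      rw [star_ofReal_dotProduct_ofReal, hu_on i hi j hj, apply_ite Complex.ofReal,
        Complex.ofReal_one, Complex.ofReal_zero])
    (fun i hi => by rw [map_ofReal_mulVec_ofReal, hu_eig i hi]; ext; simp)
    p r hp1 hpr hrn hr_half x
    (fun i hi j hj => by
      rw [map_ofReal_mulVec_ofReal, star_ofReal_dotProduct_ofReal, Complex.norm_real]
      exact h_entry i hi j hj)
    δp hδp (by linarith) hgap_hi
  simpa only [rectangleResolventIntegral, resolventSandwich, specNorm_eq_norm, res_eq_resolvent,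
    l2_opNorm_map_ofReal] using h
end
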